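/- arXiv:2003.10523 — 3 statements merged into one kernel-verified Lean document; each statement's English description precedes it below -/
import Mathlib

section
/- The ReLU activation x ↦ max(x,0) restricted to [-1,1] is admissible with order of approximation φ_ReLU(ε) = O(1/ε), and the sigmoid activation x ↦ e^x/(1+e^x) restricted to [-1,1] is admissible with order of approximation φ_sigmoid(ε) = O(log(1/ε)). That is: each function is 1-Lipschitz on [-1,1] and bounded in absolute value by 1 there, and there is a constant C > 0 such that for every ε ∈ (0,1] there exists a real polynomial P of degree at most C/ε (respectively at most C·log(1/ε)) with sup_{x∈[-1,1]} |P(x) − σ(x)| ≤ ε and P([-1,1]) ⊆ [0,1]. -/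
open MeasureTheory Polynomial Matrix
open scoped Classical

noncomputable section

/-- One layer of a neural network: apply the weight matrix, then the activation
coordinatewise. -/
def applyLayer (σ : ℝ → ℝ) {m n : ℕ} (W : Matrix (Fin m) (Fin n) ℝ) (v : Fin n → ℝ) :
    Fin m → ℝ :=
  fun j => σ (∑ i, W j i * v i)

/-- Iterated application of `n` square hidden layers. -/
def iterLayers (σ : ℝ → ℝ) {m : ℕ} :
    (n : ℕ) → (Fin n → Matrix (Fin m) (Fin m) ℝ) → (Fin m → ℝ) → (Fin m → ℝ)
  | 0, _, v => v
  | n + 1, W, v => applyLayer σ (W (Fin.last n)) (iterLayers σ n (fun i => W i.castSucc) v)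

/-- Output of a neural network of depth `n+1` (one rectangular layer `W1` followed by
`n` square layers `Ws` and output weights `a`):
`f(W,x) = aᵀ σ(W_{n+1} σ( ⋯ σ(W_1 x) ⋯ ))`. -/
def nnFun (σ : ℝ → ℝ) {d m n : ℕ} (a : Fin m → ℝ)
    (W1 : Matrix (Fin m) (Fin d) ℝ) (Ws : Fin n → Matrix (Fin m) (Fin m) ℝ)
    (x : Fin d → ℝ) : ℝ :=
  ∑ j, a j * iterLayers σ n Ws (applyLayer σ W1 x) j

/-- The monomial `x_α = ∏ i, (x i) ^ (α i)`. -/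
def monom {d : ℕ} (α : Fin d → ℕ) (x : Fin d → ℝ) : ℝ := ∏ i, x i ^ α i

/-- Topological support of a measure on `ℝ`. -/
def measSupport (P : Measure ℝ) : Set ℝ := {x | ∀ U ∈ nhds x, P U ≠ 0}

/-- `ω(P,t) = min(|Support(P)| − 1, t)`, equal to `t` when the support is infinite. -/
def omegaP (P : Measure ℝ) (t : ℕ) : ℕ :=
  if (measSupport P).Finite then min ((measSupport P).ncard - 1) t else t

/-- `M' = min(M, d·(|Support(P)| − 1))`, equal to `M` when the support is infinite. -/
def capM (P : Measure ℝ) (d M : ℕ) : ℕ :=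
  if (measSupport P).Finite then min M (d * ((measSupport P).ncard - 1)) else M

/-- `F_{s,t}`: multi-indices `α ∈ ℕ^d` with all entries `≤ s` and total degree `t`. -/
def Fst (d s t : ℕ) : Finset (Fin d → ℕ) :=
  (Fintype.piFinset fun _ : Fin d => Finset.range (s + 1)).filter fun α => ∑ i, α i = t

/-- The `(d,M)`-multiplicities set `C = ∪_{t=0}^{M'} F_{ω(P,M),t}`. -/
def multSet (P : Measure ℝ) (d M : ℕ) : Finset (Fin d → ℕ) :=
  (Fintype.piFinset fun _ : Fin d => Finset.range (omegaP P M + 1)).filter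
    fun α => ∑ i, α i ≤ capM P d M

/-- `n`-th moment `c_n = E[X^n]` of `P`. -/
def momentP (P : Measure ℝ) (n : ℕ) : ℝ := ∫ x, x ^ n ∂P

/-- Hankel determinant `D_n = det((c_{i+j})_{0 ≤ i,j ≤ n})` of moments of `P`. -/
def Dn (P : Measure ℝ) (n : ℕ) : ℝ :=
  Matrix.det (Matrix.of fun i j : Fin (n + 1) => momentP P ((i : ℕ) + (j : ℕ)))

/-- `c(P,k) = min(min_{1 ≤ i ≤ ω(P,k)} (D_i/D_{i−1})^{k/2}, 1)`. -/
def cPk (P : Measure ℝ) (k : ℕ) : ℝ :=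
  sInf (insert (1 : ℝ)
    ((fun i => (Dn P i / Dn P (i - 1)) ^ ((k : ℝ) / 2)) '' Set.Icc 1 (omegaP P k)))

/-- `max(max_{1 ≤ i ≤ ω(P,k)} (D_i/D_{i−1})^{k/2}, 1)`. -/
def cPkMax (P : Measure ℝ) (k : ℕ) : ℝ :=
  sSup (insert (1 : ℝ)
    ((fun i => (Dn P i / Dn P (i - 1)) ^ ((k : ℝ) / 2)) '' Set.Icc 1 (omegaP P k)))

/-- `max(max_{1 ≤ i ≤ ω(P,k)} (D_i/D_{i−1})^k, 1)`. -/
def ratioMaxK (P : Measure ℝ) (k : ℕ) : ℝ :=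
  sSup (insert (1 : ℝ)
    ((fun i => (Dn P i / Dn P (i - 1)) ^ k) '' Set.Icc 1 (omegaP P k)))

/-- `min(min_{1 ≤ i ≤ ω(P,k)} (D_i/D_{i−1})^k, 1)`. -/
def ratioMinK (P : Measure ℝ) (k : ℕ) : ℝ :=
  sInf (insert (1 : ℝ)
    ((fun i => (Dn P i / Dn P (i - 1)) ^ k) '' Set.Icc 1 (omegaP P k)))

/-- `f(P,k) = max(c_{2ω(P,k)}^k, 1) · max(max_i (D_i/D_{i−1})^k, 1) / min(min_i (D_i/D_{i−1})^k, 1)`. -/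
def fPk (P : Measure ℝ) (k : ℕ) : ℝ :=
  max (momentP P (2 * omegaP P k) ^ k) 1 * ratioMaxK P k / ratioMinK P k

/-- `C(P,k) = f(P,k)/c(P,k)`. -/
def CPk (P : Measure ℝ) (k : ℕ) : ℝ := fPk P k / cPk P k

/-- An admissible distribution: a non-constant probability measure supported in `[-1,1]`. -/
def AdmissibleDist (P : Measure ℝ) : Prop :=
  IsProbabilityMeasure P ∧ P (Set.Icc (-1 : ℝ) 1) = 1 ∧ ∀ c : ℝ, P {c} < 1

/-- The product measure `P^{⊗d}` on `ℝ^d`. -/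
def piP (P : Measure ℝ) (d : ℕ) : Measure (Fin d → ℝ) := Measure.pi fun _ => P

/-- The joint law of `N` i.i.d. samples from `P^{⊗d}`. -/
def samples (P : Measure ℝ) (d N : ℕ) : Measure (Fin N → Fin d → ℝ) :=
  Measure.pi fun _ => piP P d

/-- Order of polynomial approximation of `σ` on `[-1,1]`: the least degree `r` for which
some real polynomial of degree `r` is uniformly within `ε` of `σ` on `[-1,1]`. -/
def approxOrder (σ : ℝ → ℝ) (ε : ℝ) : ℕ :=
  sInf {r : ℕ | ∃ p : Polynomial ℝ, p.natDegree = r ∧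
    ∀ x ∈ Set.Icc (-1 : ℝ) 1, |p.eval x - σ x| ≤ ε}

/-- An admissible activation function. -/
def AdmissibleActivation (σ : ℝ → ℝ) : Prop :=
  (∀ ε : ℝ, 0 < ε → ∃ p : Polynomial ℝ,
      ∀ x ∈ Set.Icc (-1 : ℝ) 1, |p.eval x - σ x| ≤ ε) ∧
  (∀ ε : ℝ, 0 < ε → ∃ p : Polynomial ℝ, p.natDegree = approxOrder σ ε ∧
      (∀ x ∈ Set.Icc (-1 : ℝ) 1, |p.eval x - σ x| ≤ ε) ∧
      ∀ x ∈ Set.Icc (-1 : ℝ) 1, p.eval x ∈ Set.Icc (0 : ℝ) 1) ∧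
  LipschitzOnWith 1 σ (Set.Icc (-1) 1) ∧
  ∀ x ∈ Set.Icc (-1 : ℝ) 1, |σ x| ≤ 1

/-- Quadratic form `vᵀ A v`. -/
def quadForm {n : Type*} [Fintype n] (A : Matrix n n ℝ) (v : n → ℝ) : ℝ :=
  ∑ i, ∑ j, v i * A i j * v j

/-- Smallest eigenvalue of a symmetric matrix (Rayleigh characterization). -/
def lamMin {n : Type*} [Fintype n] (A : Matrix n n ℝ) : ℝ :=
  sInf {r : ℝ | ∃ v : n → ℝ, ∑ i, v i ^ 2 = 1 ∧ r = quadForm A v}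

/-- Largest eigenvalue of a symmetric matrix (Rayleigh characterization). -/
def lamMax {n : Type*} [Fintype n] (A : Matrix n n ℝ) : ℝ :=
  sSup {r : ℝ | ∃ v : n → ℝ, ∑ i, v i ^ 2 = 1 ∧ r = quadForm A v}

/-- Smallest singular value. -/
def sigMin {n : Type*} [Fintype n] (A : Matrix n n ℝ) : ℝ :=
  Real.sqrt (lamMin (Aᵀ * A))

/-- Largest singular value. -/
def sigMax {n : Type*} [Fintype n] (A : Matrix n n ℝ) : ℝ :=
  Real.sqrt (lamMax (Aᵀ * A))

/-- The covariance matrix `Σ = E[𝒳 𝒳ᵀ]` of the monomials indexed by the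
`(d,k)`-multiplicities set, for input `X ∼ P^{⊗d}`. -/
def covMat (P : Measure ℝ) (d k : ℕ) :
    Matrix {α // α ∈ multSet P d k} {α // α ∈ multSet P d k} ℝ :=
  Matrix.of fun a b => ∫ x, monom a.1 x * monom b.1 x ∂(piP P d)


lemma aux_scale (σ : ℝ → ℝ) (hσ : ∀ x ∈ Set.Icc (-1 : ℝ) 1, σ x ∈ Set.Icc (0 : ℝ) 1)
    (δ : ℝ) (hδ : 0 < δ) (p : Polynomial ℝ)
    (hp : ∀ x ∈ Set.Icc (-1 : ℝ) 1, |p.eval x - σ x| ≤ δ) :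
    ∃ q : Polynomial ℝ, q.natDegree ≤ p.natDegree ∧
      (∀ x ∈ Set.Icc (-1 : ℝ) 1, |q.eval x - σ x| ≤ 2 * δ) ∧
      ∀ x ∈ Set.Icc (-1 : ℝ) 1, q.eval x ∈ Set.Icc (0 : ℝ) 1 := by
  have h1 : (0 : ℝ) < 1 + 2 * δ := by linarith
  refine ⟨C (1 / (1 + 2 * δ)) * (p + C δ), ?_, ?_, ?_⟩
  · refine (natDegree_C_mul_le _ _).trans ?_
    simp
  · intro x hx
    have h2 := abs_le.1 (hp x hx)
    obtain ⟨h3, h4⟩ := hσ x hx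
    have e : (C (1 / (1 + 2 * δ)) * (p + C δ)).eval x = (p.eval x + δ) / (1 + 2 * δ) := by
      simp; field_simp
    rw [e, abs_le]
    constructor
    · rw [neg_le_sub_iff_le_add, ← sub_le_iff_le_add, le_div_iff₀ h1]
      nlinarith [mul_nonneg hδ.le hδ.le]
    · rw [sub_le_iff_le_add, div_le_iff₀ h1]
      nlinarith [mul_nonneg hδ.le hδ.le]
  · intro x hx
    have h2 := abs_le.1 (hp x hx)
    obtain ⟨h3, h4⟩ := hσ x hx
    have e : (C (1 / (1 + 2 * δ)) * (p + C δ)).eval x = (p.eval x + δ) / (1 + 2 * δ) := by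
      simp; field_simp
    rw [e]
    constructor
    · apply div_nonneg <;> linarith
    · rw [div_le_one h1]; linarith

lemma aux_antideriv (K : Polynomial ℝ) : ∃ Q : Polynomial ℝ,
    Q.natDegree ≤ K.natDegree + 1 ∧ Q.eval 0 = 0 ∧ derivative Q = K := by
  refine ⟨∑ i ∈ Finset.range (K.natDegree + 1), C (K.coeff i / (i + 1)) * X ^ (i + 1), ?_, ?_, ?_⟩
  · apply natDegree_sum_le_of_forall_le
    intro i hi
    have := Finset.mem_range.1 hi
    exact (natDegree_C_mul_X_pow_le _ _).trans (by omega)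
  · simp [eval_finsetSum]
  · conv_rhs => rw [K.as_sum_range_C_mul_X_pow]
    rw [derivative_sum]
    refine Finset.sum_congr rfl fun i _ => ?_
    rw [derivative_C_mul_X_pow]
    have : (i : ℝ) + 1 ≠ 0 := by positivity
    congr 2
    push_cast
    field_simp

lemma aux_cheb (k : ℕ) : ∃ R : Polynomial ℝ, R.natDegree ≤ 4 * k + 1 ∧
    (∀ x ∈ Set.Icc (-1 : ℝ) 1, |x * R.eval x| ≤ 1) ∧
    (∀ x, R.eval (-x) = R.eval x) ∧
    (∀ x, 0 < x → x ≤ 1 / (4 * k + 1 : ℝ) → (4 * k + 1 : ℝ) / 2 ≤ R.eval x) := by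
  set N : ℤ := 4 * k + 1 with hN
  have hodd : Odd N := ⟨2 * k, by rw [hN]; ring⟩
  set T := Polynomial.Chebyshev.T ℝ N with hT
  have hNr : ((N : ℤ) : ℝ) = 4 * k + 1 := by rw [hN]; push_cast; ring
  have hTn : ∀ x, T.eval (-x) = - T.eval x := by
    intro x
    rw [hT, Chebyshev.T_eval_neg, Int.negOnePow_odd _ hodd]; simp
  have h0 : T.coeff 0 = 0 := by
    rw [coeff_zero_eq_eval_zero]
    have := hTn 0
    rw [neg_zero] at this
    linarith
  have hTX : ∀ x, T.eval x = x * (divX T).eval x := by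
    intro x
    have := congrArg (eval x) (divX_mul_X_add T)
    rw [h0] at this
    simp at this
    rw [← this]; ring
  have hsin : ∀ φ : ℝ, T.eval (Real.sin φ) = Real.sin ((4 * k + 1) * φ) := by
    intro φ
    rw [← Real.cos_pi_div_two_sub, hT, Chebyshev.T_real_cos, hNr,
      ← Real.cos_pi_div_two_sub, ← Real.cos_add_nat_mul_two_pi (Real.pi / 2 - (4 * k + 1) * φ) k]
    congr 1; ring
  refine ⟨divX T, ?_, ?_, ?_, ?_⟩
  · rw [natDegree_divX_eq_natDegree_tsub_one, hT, Chebyshev.natDegree_T]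
    omega
  · intro x hx
    rw [← hTX, ← Real.sin_arcsin hx.1 hx.2, hsin]
    exact Real.abs_sin_le_one _
  · intro x
    by_cases hx : x = 0
    · simp [hx]
    · have := hTn x
      rw [hTX, hTX] at this
      apply mul_left_cancel₀ hx
      linarith
  · intro x hx hx1
    have hNpos : (0 : ℝ) < 4 * k + 1 := by positivity
    have hk : (0 : ℝ) ≤ k := by positivity
    have hx2 : x ≤ 1 := hx1.trans (by rw [div_le_one hNpos]; linarith)
    set φ := Real.arcsin x with hφ
    have hs : Real.sin φ = x := Real.sin_arcsin (by linarith) hx2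
    have hφ0 : 0 ≤ φ := Real.arcsin_nonneg.2 hx.le
    have hφ1 : φ ≤ Real.pi / 2 := Real.arcsin_le_pi_div_two x
    have h1 := Real.mul_le_sin hφ0 hφ1
    have h2 := Real.sin_le hφ0
    rw [hs] at h1 h2
    have hpi := Real.pi_pos
    have h3 : (4 * k + 1 : ℝ) * φ ≤ Real.pi / 2 := by
      have h4 : 2 / Real.pi * φ ≤ 1 / (4 * k + 1 : ℝ) := h1.trans hx1
      rw [div_mul_eq_mul_div, div_le_div_iff₀ hpi hNpos] at h4
      linarith
    have h5 := Real.mul_le_sin (by positivity) h3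
    rw [← hsin, hs, hTX] at h5
    have h6 : (1 : ℝ) / 2 ≤ 2 / Real.pi := by
      rw [div_le_div_iff₀ (by norm_num) hpi]; linarith [Real.pi_le_four]
    have h7 : (4 * k + 1 : ℝ) / 2 * x ≤ x * (divX T).eval x := by
      refine le_trans ?_ h5
      calc (4 * k + 1 : ℝ) / 2 * x = 1 / 2 * ((4 * k + 1 : ℝ) * x) := by ring
        _ ≤ _ := by gcongr
    rw [mul_comm _ x] at h7
    exact le_of_mul_le_mul_left h7 hx

lemma aux_abs (k : ℕ) : ∃ A : Polynomial ℝ, A.natDegree ≤ 8 * k + 4 ∧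
    ∀ x ∈ Set.Icc (-1 : ℝ) 1, |A.eval x - abs x| ≤ 4 / (4 * k + 1 : ℝ) := by
  obtain ⟨R, hdeg, hb, hev, hlow⟩ := aux_cheb k
  obtain ⟨Q, hQd, hQ0, hQ'⟩ := aux_antideriv (R ^ 2)
  have hNpos : (0 : ℝ) < 4 * k + 1 := by positivity
  have hk : (0 : ℝ) ≤ k := by positivity
  have hN1 : 1 / (4 * k + 1 : ℝ) ≤ 1 := by rw [div_le_one hNpos]; linarith
  have hder : ∀ x, HasDerivAt (fun x => Q.eval x) ((R.eval x) ^ 2) x := by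
    intro x
    have := Q.hasDerivAt x
    rwa [hQ', eval_pow] at this
  have hmono : Monotone (fun x => Q.eval x) := by
    apply monotone_of_deriv_nonneg (fun x => (hder x).differentiableAt)
    intro x
    rw [(hder x).deriv]; positivity
  have hoddQ : ∀ x, Q.eval (-x) = - Q.eval x := by
    intro x
    have hd : ∀ y, HasDerivAt (fun y => Q.eval (-y) + Q.eval y) 0 y := by
      intro y
      have h1 := ((hder (-y)).comp y (hasDerivAt_neg y)).add (hder y)
      rw [hev] at h1
      exact h1.congr_deriv (by ring)
    have := is_const_of_deriv_eq_zero (fun y => (hd y).differentiableAt)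
      (fun y => (hd y).deriv) x 0
    simp [hQ0] at this
    linarith
  have hQ1 : (4 * k + 1 : ℝ) / 4 ≤ Q.eval 1 := by
    have h1 := (convex_Icc (0 : ℝ) (1 / (4 * k + 1 : ℝ))).mul_sub_le_image_sub_of_le_deriv
      (f := fun x => Q.eval x) (C := ((4 * k + 1 : ℝ) / 2) ^ 2)
      (Q.continuous.continuousOn) (fun x _ => (hder x).differentiableAt.differentiableWithinAt)
      (by
        intro x hx
        rw [interior_Icc] at hx
        rw [(hder x).deriv]
        have := hlow x hx.1 hx.2.le
        gcongr) 0 ⟨le_rfl, by positivity⟩ (1 / (4 * k + 1 : ℝ)) ⟨by positivity, le_rfl⟩ (by positivity)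
    have h2 : Q.eval (1 / (4 * k + 1 : ℝ)) ≤ Q.eval 1 := hmono hN1
    simp only [hQ0] at h1
    have h3 : ((4 * k + 1 : ℝ) / 2) ^ 2 * (1 / (4 * k + 1 : ℝ) - 0) = (4 * k + 1 : ℝ) / 4 := by
      field_simp; norm_num
    linarith
  have hQ1pos : 0 < Q.eval 1 := lt_of_lt_of_le (by positivity) hQ1
  have hup : ∀ x, 0 < x → x ≤ 1 → Q.eval 1 + 1 ≤ Q.eval x + 1 / x := by
    intro x hx hx1
    have hd : ∀ y, 0 < y → HasDerivAt (fun y => Q.eval y + y⁻¹) ((R.eval y) ^ 2 + -(y ^ 2)⁻¹) y :=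
      fun y hy => (hder y).add (hasDerivAt_inv hy.ne')
    have := antitoneOn_of_deriv_nonpos (convex_Icc x 1) (f := fun y => Q.eval y + y⁻¹)
      (fun y hy => (hd y (hx.trans_le hy.1)).continuousAt.continuousWithinAt)
      (fun y hy => by
        rw [interior_Icc] at hy
        exact (hd y (hx.trans hy.1)).differentiableAt.differentiableWithinAt)
      (fun y hy => by
        rw [interior_Icc] at hy
        have hy0 : 0 < y := hx.trans hy.1
        rw [(hd y hy0).deriv]
        have h1 := hb y ⟨by linarith, hy.2.le⟩
        have h2 : (y * R.eval y) ^ 2 ≤ 1 := (sq_le_one_iff_abs_le_one _).2 h1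
        have h3 : (R.eval y) ^ 2 ≤ (y ^ 2)⁻¹ := by
          rw [← one_div, le_div_iff₀ (by positivity)]
          linarith [mul_pow y (R.eval y) 2]
        linarith)
      ⟨le_rfl, hx1⟩ ⟨hx1, le_rfl⟩ hx1
    simpa using this
  have key : ∀ x, 0 ≤ x → x ≤ 1 → |x * Q.eval x / Q.eval 1 - x| ≤ 4 / (4 * k + 1 : ℝ) := by
    intro x hx hx1
    rcases hx.eq_or_lt with rfl | hx
    · simp; positivity
    have h1 : Q.eval x ≤ Q.eval 1 := hmono hx1
    have h2 := hup x hx hx1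
    have h3 : x * (Q.eval 1 - Q.eval x) ≤ 1 := by
      have := mul_le_mul_of_nonneg_left h2 hx.le
      have e : x * (Q.eval x + 1 / x) = x * Q.eval x + 1 := by field_simp
      rw [e] at this
      nlinarith
    have h4 : x * Q.eval x / Q.eval 1 - x = - (x * (Q.eval 1 - Q.eval x) / Q.eval 1) := by
      field_simp; ring
    rw [h4, abs_neg, abs_of_nonneg (div_nonneg (mul_nonneg hx.le (by linarith)) hQ1pos.le),
      div_le_div_iff₀ hQ1pos hNpos]
    nlinarith
  refine ⟨C (1 / Q.eval 1) * (X * Q), ?_, ?_⟩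
  · refine (natDegree_C_mul_le _ _).trans ?_
    have h1 : (X * Q).natDegree ≤ (X : Polynomial ℝ).natDegree + Q.natDegree := natDegree_mul_le
    have h2 : (R ^ 2).natDegree ≤ 2 * R.natDegree := natDegree_pow_le
    rw [natDegree_X] at h1
    omega
  · intro x hx
    have e : (C (1 / Q.eval 1) * (X * Q)).eval x = x * Q.eval x / Q.eval 1 := by
      simp only [eval_mul, eval_C, eval_X]; ring
    rw [e]
    rcases le_total 0 x with h | h
    · rw [abs_of_nonneg h]
      exact key x h hx.2
    · rw [abs_of_nonpos h]
      have := key (-x) (by linarith) (by linarith [hx.1])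
      rw [hoddQ] at this
      simpa using this

lemma aux_relu : ∃ C > (0 : ℝ), ∀ ε ∈ Set.Ioc (0 : ℝ) 1, ∃ p : Polynomial ℝ,
        (p.natDegree : ℝ) ≤ C / ε ∧
        (∀ x ∈ Set.Icc (-1 : ℝ) 1, |p.eval x - max x 0| ≤ ε) ∧
        ∀ x ∈ Set.Icc (-1 : ℝ) 1, p.eval x ∈ Set.Icc (0 : ℝ) 1 := by
  refine ⟨20, by norm_num, ?_⟩
  rintro ε ⟨hε, hε1⟩
  set k := ⌈1 / ε⌉₊ with hk
  have hk1 : 1 / ε ≤ k := Nat.le_ceil _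
  have hk2 : (k : ℝ) < 1 / ε + 1 := Nat.ceil_lt_add_one (by positivity)
  have hone : 1 ≤ 1 / ε := by rw [le_div_iff₀ hε]; linarith
  obtain ⟨A, hA, hAx⟩ := aux_abs k
  have herr : 4 / (4 * k + 1 : ℝ) ≤ ε := by
    rw [div_le_iff₀ (by positivity)]
    have := mul_le_mul_of_nonneg_left hk1 hε.le
    rw [mul_one_div_cancel hε.ne'] at this
    nlinarith
  obtain ⟨q, hq, hq1, hq2⟩ := aux_scale (fun x => max x 0)
    (fun x hx => ⟨le_max_right _ _, max_le hx.2 zero_le_one⟩) (ε / 2) (by positivity)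
    (C (1 / 2) * (X + A)) (by
      intro x hx
      have h1 := (hAx x hx).trans herr
      have e : (C (1 / 2 : ℝ) * (X + A)).eval x - max x 0 = (A.eval x - abs x) / 2 := by
        simp only [eval_mul, eval_C, eval_add, eval_X]
        rcases le_total 0 x with h | h
        · rw [abs_of_nonneg h, max_eq_left h]; ring
        · rw [abs_of_nonpos h, max_eq_right h]; ring
      rw [e, abs_div, abs_of_pos (by norm_num : (0 : ℝ) < 2)]
      linarith)
  refine ⟨q, ?_, fun x hx => (hq1 x hx).trans (by linarith), hq2⟩
  have h1 : (C (1 / 2 : ℝ) * (X + A)).natDegree ≤ 8 * k + 4 := by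
    refine (natDegree_C_mul_le _ _).trans ((natDegree_add_le _ _).trans ?_)
    rw [natDegree_X]; omega
  have h2 : (q.natDegree : ℝ) ≤ 8 * k + 4 := by exact_mod_cast hq.trans h1
  have : (20 : ℝ) / ε = 20 * (1 / ε) := by ring
  rw [this]
  linarith

lemma aux_sig_bd (x : ℝ) : Real.exp x / (1 + Real.exp x) ∈ Set.Icc (0 : ℝ) 1 := by
  have := Real.exp_pos x
  refine ⟨by positivity, ?_⟩
  rw [div_le_one (by positivity)]; linarith

lemma aux_sig_ne (z : ℂ) (hz : ‖z‖ ≤ 2) : 1 + Complex.exp z ≠ 0 := by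
  intro h
  have h1 : Complex.exp z = -1 := by linear_combination h
  have h2 := congrArg Complex.im h1
  have h3 := congrArg Complex.re h1
  rw [Complex.exp_im] at h2
  rw [Complex.exp_re] at h3
  simp at h2 h3
  have him := abs_le.1 ((Complex.abs_im_le_norm z).trans hz)
  have hpi := Real.pi_gt_three
  have h4 : z.im = 0 := (Real.sin_eq_zero_iff_of_lt_of_lt (by linarith) (by linarith)).1 h2
  rw [h4] at h3
  have := Real.exp_pos z.re
  simp at h3
  linarith

lemma aux_sig_geom : ∃ a ∈ Set.Ioo (0 : ℝ) 1, ∃ B > (0 : ℝ), ∀ n : ℕ, ∃ p : Polynomial ℝ,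
    p.natDegree ≤ n ∧
    ∀ x ∈ Set.Icc (-1 : ℝ) 1, |p.eval x - Real.exp x / (1 + Real.exp x)| ≤ B * a ^ n := by
  have hd : DifferentiableOn ℂ (fun z => Complex.exp z / (1 + Complex.exp z))
      (Metric.closedBall (0 : ℂ) ((2 : NNReal) : ℝ)) := by
    intro z hz
    have hz' : ‖z‖ ≤ 2 := by simpa using hz
    have := aux_sig_ne z hz'
    apply DifferentiableAt.differentiableWithinAt
    fun_prop (disch := exact this)
  have hps := hd.hasFPowerSeriesOnBall (by norm_num)
  obtain ⟨a, ha, B, hB, hap⟩ := hps.uniform_geometric_approx (r' := 3 / 2) (by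
    rw [ENNReal.coe_lt_coe]
    rw [← NNReal.coe_lt_coe]; push_cast; norm_num)
  set P := cauchyPowerSeries (fun z => Complex.exp z / (1 + Complex.exp z)) 0 ((2 : NNReal) : ℝ)
  refine ⟨a, ha, B, hB, fun n => ⟨∑ i ∈ Finset.range n, C ((P.coeff i).re) * X ^ i, ?_, ?_⟩⟩
  · apply natDegree_sum_le_of_forall_le
    intro i hi
    have := Finset.mem_range.1 hi
    exact (natDegree_C_mul_X_pow_le _ _).trans (by omega)
  · intro x hx
    have h := hap (x : ℂ) (by
      rw [mem_ball_zero_iff, Complex.norm_real, Real.norm_eq_abs]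
      have := abs_le.2 hx
      push_cast
      linarith) n
    rw [zero_add, norm_sub_rev] at h
    have h2 := (Complex.abs_re_le_norm _).trans h
    have e1 : (Complex.exp x / (1 + Complex.exp x)).re = Real.exp x / (1 + Real.exp x) := by
      rw [← Complex.ofReal_exp]
      norm_cast
    rw [Complex.sub_re, e1] at h2
    convert! h2 using 3
    rw [FormalMultilinearSeries.partialSum, Complex.re_sum, eval_finsetSum]
    refine Finset.sum_congr rfl fun i _ => ?_
    rw [FormalMultilinearSeries.apply_eq_pow_smul_coeff, smul_eq_mul, ← Complex.ofReal_pow,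
      Complex.re_ofReal_mul]
    rw [eval_mul, eval_C, eval_pow, eval_X, mul_comm]

lemma aux_sigmoid : ∃ C > (0 : ℝ), ∀ ε ∈ Set.Ioc (0 : ℝ) 1, ∃ p : Polynomial ℝ,
        (p.natDegree : ℝ) ≤ C * Real.log (1 / ε) ∧
        (∀ x ∈ Set.Icc (-1 : ℝ) 1, |p.eval x - Real.exp x / (1 + Real.exp x)| ≤ ε) ∧
        ∀ x ∈ Set.Icc (-1 : ℝ) 1, p.eval x ∈ Set.Icc (0 : ℝ) 1 := by
  obtain ⟨a, ⟨ha0, ha1⟩, B, hB, hap⟩ := aux_sig_geom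
  set l := Real.log (1 / a) with hl
  have hlpos : 0 < l := Real.log_pos (by rw [lt_div_iff₀ ha0]; linarith)
  set D := |Real.log (2 * B)| with hD
  have hD0 : 0 ≤ D := abs_nonneg _
  have hlog2 : 0 < Real.log 2 := Real.log_pos (by norm_num)
  refine ⟨1 / l + (D / l + 1) / Real.log 2, by positivity, ?_⟩
  rintro ε ⟨hε, hε1⟩
  have hL0 : 0 ≤ Real.log (1 / ε) := Real.log_nonneg (by rw [le_div_iff₀ hε]; linarith)
  by_cases hc : 1 / 2 ≤ ε
  · refine ⟨C (1 / 2), ?_, ?_, ?_⟩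
    · rw [natDegree_C]; push_cast; positivity
    · intro x hx
      obtain ⟨h1, h2⟩ := aux_sig_bd x
      rw [eval_C, abs_le]; constructor <;> linarith
    · intro x hx
      rw [eval_C]; constructor <;> norm_num
  · push Not at hc
    have hL2 : Real.log 2 ≤ Real.log (1 / ε) := by
      apply Real.log_le_log (by norm_num)
      rw [le_div_iff₀ hε]; linarith
    set L := Real.log (1 / ε) with hL
    set n := ⌈(L + D) / l⌉₊ with hn
    have hn1 : (L + D) / l ≤ n := Nat.le_ceil _
    have hn2 : (n : ℝ) < (L + D) / l + 1 := Nat.ceil_lt_add_one (by positivity)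
    obtain ⟨p, hp, hpx⟩ := hap n
    have herr : B * a ^ n ≤ ε / 2 := by
      have h1 : Real.log (2 * B * a ^ n) ≤ Real.log ε := by
        rw [Real.log_mul (by positivity) (by positivity), Real.log_pow]
        have h2 : Real.log (2 * B) ≤ D := le_abs_self _
        have h3 : l = - Real.log a := by rw [hl, one_div, Real.log_inv]
        have h4 : L = - Real.log ε := by rw [hL, one_div, Real.log_inv]
        rw [div_le_iff₀ hlpos] at hn1
        have h5 : Real.log a = - l := by linarith
        rw [h5]
        linarith
      have := (Real.log_le_log_iff (by positivity) hε).1 h1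
      linarith
    obtain ⟨q, hq, hq1, hq2⟩ := aux_scale _ (fun x _ => aux_sig_bd x) (ε / 2) (by positivity) p
      (fun x hx => (hpx x hx).trans herr)
    refine ⟨q, ?_, fun x hx => (hq1 x hx).trans (by linarith), hq2⟩
    have h1 : (q.natDegree : ℝ) ≤ n := by exact_mod_cast hq.trans hp
    have h2 : D / l + 1 ≤ (D / l + 1) / Real.log 2 * L := by
      rw [div_mul_eq_mul_div, le_div_iff₀ hlog2]
      have : 0 ≤ D / l + 1 := by positivity
      gcongr
    have h3 : (L + D) / l = 1 / l * L + D / l := by ring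
    rw [add_mul]
    linarith

lemma aux_sig_lip :
    LipschitzOnWith 1 (fun x : ℝ => Real.exp x / (1 + Real.exp x)) (Set.Icc (-1) 1) := by
  have hd : ∀ x : ℝ, HasDerivAt (fun x : ℝ => Real.exp x / (1 + Real.exp x))
      (Real.exp x / (1 + Real.exp x) ^ 2) x := by
    intro x
    have hp := Real.exp_pos x
    convert! (Real.hasDerivAt_exp x).div ((Real.hasDerivAt_exp x).const_add 1) (by positivity) using 1
    ring
  apply (convex_Icc (-1 : ℝ) 1).lipschitzOnWith_of_nnnorm_hasDerivWithin_le
    (fun x _ => (hd x).hasDerivWithinAt)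
  intro x _
  have hp := Real.exp_pos x
  rw [← NNReal.coe_le_coe, coe_nnnorm, Real.norm_eq_abs, abs_of_nonneg (by positivity),
    NNReal.coe_one, div_le_one (by positivity)]
  nlinarith

/-- ReLU and sigmoid are admissible activations on `[-1,1]`:
each is 1-Lipschitz and bounded by 1 there, and admits uniform polynomial approximants
mapping `[-1,1]` into `[0,1]`, of degree `O(1/ε)` for ReLU and `O(log(1/ε))` for sigmoid. -/
theorem relu_and_sigmoid_admissible :
    (LipschitzOnWith 1 (fun x : ℝ => max x 0) (Set.Icc (-1) 1) ∧
      (∀ x ∈ Set.Icc (-1 : ℝ) 1, |max x 0| ≤ 1) ∧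
      ∃ C > (0 : ℝ), ∀ ε ∈ Set.Ioc (0 : ℝ) 1, ∃ p : Polynomial ℝ,
        (p.natDegree : ℝ) ≤ C / ε ∧
        (∀ x ∈ Set.Icc (-1 : ℝ) 1, |p.eval x - max x 0| ≤ ε) ∧
        ∀ x ∈ Set.Icc (-1 : ℝ) 1, p.eval x ∈ Set.Icc (0 : ℝ) 1) ∧
    (LipschitzOnWith 1 (fun x : ℝ => Real.exp x / (1 + Real.exp x)) (Set.Icc (-1) 1) ∧
      (∀ x ∈ Set.Icc (-1 : ℝ) 1, |Real.exp x / (1 + Real.exp x)| ≤ 1) ∧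
      ∃ C > (0 : ℝ), ∀ ε ∈ Set.Ioc (0 : ℝ) 1, ∃ p : Polynomial ℝ,
        (p.natDegree : ℝ) ≤ C * Real.log (1 / ε) ∧
        (∀ x ∈ Set.Icc (-1 : ℝ) 1, |p.eval x - Real.exp x / (1 + Real.exp x)| ≤ ε) ∧
        ∀ x ∈ Set.Icc (-1 : ℝ) 1, p.eval x ∈ Set.Icc (0 : ℝ) 1) := by
  refine ⟨⟨?_, ?_, aux_relu⟩, aux_sig_lip, ?_, aux_sigmoid⟩
  · exact (LipschitzWith.id.max_const 0).lipschitzOnWith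
  · intro x hx
    rw [abs_of_nonneg (le_max_right _ _)]
    exact max_le hx.2 zero_le_one
  · intro x _
    obtain ⟨h1, h2⟩ := aux_sig_bd x
    rw [abs_of_nonneg h1]; exact h2

end
end

section
/- Let σ be a real polynomial of degree k, let X^(1),…,X^(N) ∈ ℝ^d be i.i.d. random vectors whose coordinates are jointly continuous, and let Y_i = f(W*, X^(i)) be labels generated by an L-layer neural network with activation σ and weights W*. Let C = ∪_{t=0}^{k^L} F_{t,t} (all multi-indices of total degree at most k^L) and let ĥ(x) = Σ_{α∈C} q̂_α x_α be the tensor-OLS predictor fitted to (X^(i), Y_i), i = 1,…,N. Then, as soon as N ≥ Σ_{t=0}^{k^L} binom(d+t−1, t), with probability one over X^(1),…,X^(N) it holds that ĥ(x) = f(W*, x) for every x ∈ ℝ^d. -/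
open MeasureTheory Polynomial Matrix
open scoped Classical

noncomputable section

lemma aux_ae_pi_succ {E : Type} [MeasurableSpace E] (ν : Measure E) [SigmaFinite ν] (n : ℕ)
    (S : Set (Fin (n + 1) → E)) (hS : MeasurableSet S)
    (h : ∀ᵐ Z ∂(Measure.pi fun _ : Fin n => ν), ∀ᵐ x ∂ν, (Fin.cons x Z : Fin (n + 1) → E) ∈ S) :
    ∀ᵐ X ∂(Measure.pi fun _ : Fin (n + 1) => ν), X ∈ S := by
  have hmp := (measurePreserving_piFinSuccAbove (fun _ : Fin (n + 1) => ν) 0).symm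
  have hc : Measurable (fun p : E × (Fin n → E) => (Fin.cons p.1 p.2 : Fin (n + 1) → E)) := by
    refine measurable_pi_iff.2 fun i => ?_
    refine Fin.cases ?_ (fun j => ?_) i
    · simpa using measurable_fst
    · exact (measurable_pi_apply j).comp measurable_snd
  have hkey : ∀ᵐ p ∂(ν.prod (Measure.pi fun _ : Fin n => ν)),
      (Fin.cons p.1 p.2 : Fin (n + 1) → E) ∈ S := by
    rw [← Measure.prod_swap, ae_map_iff (by fun_prop) (hc hS)]
    exact (Measure.ae_prod_iff_ae_ae (measurableSet_preimage (hc.comp measurable_swap) hS)).2 h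
  rw [← hmp.map_eq]
  refine (ae_map_iff hmp.measurable.aemeasurable hS).2 ?_
  filter_upwards [hkey] with p hp
  change (MeasurableEquiv.piFinSuccAbove (fun _ : Fin (n + 1) => E) 0).symm p ∈ S
  simpa [MeasurableEquiv.piFinSuccAbove, Fin.insertNthEquiv, Fin.insertNth_zero'] using hp

lemma aux_det_ne {E : Type} [MeasurableSpace E] (ν : Measure E) [IsProbabilityMeasure ν] :
    ∀ (n : ℕ) (g : Fin n → E → ℝ), (∀ j, Measurable (g j)) →
    (∀ c : Fin n → ℝ, c ≠ 0 → ∀ᵐ x ∂ν, ∑ j, c j * g j x ≠ 0) →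
    ∀ᵐ X ∂(Measure.pi fun _ : Fin n => ν),
      Matrix.det (Matrix.of fun i j : Fin n => g j (X i)) ≠ 0 := by
  intro n
  induction n with
  | zero => intro g _ _; simp
  | succ n ih =>
    intro g hg hc
    have hm : Measurable fun X : Fin (n + 1) → E =>
        Matrix.det (Matrix.of fun i j : Fin (n + 1) => g j (X i)) := by
      simp only [Matrix.det_apply, Matrix.of_apply]
      refine Finset.measurable_sum _ fun p _ => ?_
      refine Measurable.const_smul ?_ _
      refine Finset.measurable_prod _ fun i _ => ?_
      exact (hg _).comp (measurable_pi_apply _)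
    refine aux_ae_pi_succ ν n {X | Matrix.det (Matrix.of fun i j => g j (X i)) ≠ 0}
      (hm (measurableSet_singleton 0).compl) ?_
    have h1 := ih (fun j => g j.succ) (fun j => hg _) (by
      intro c hc0
      have := hc (Fin.cons 0 c) (by
        intro h; apply hc0; funext j
        have := congrFun h j.succ
        simpa using this)
      filter_upwards [this] with x hx
      simpa [Fin.sum_univ_succ] using hx)
    filter_upwards [h1] with Z hZ
    have h2 := hc (fun j => (-1) ^ (j : ℕ) *
        Matrix.det (Matrix.of fun i l : Fin n => g (j.succAbove l) (Z i))) (by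
      intro h
      apply hZ
      have := congrFun h 0
      simpa using this)
    filter_upwards [h2] with x hx
    show Matrix.det _ ≠ 0
    rw [Matrix.det_succ_row_zero]
    refine fun h => hx ?_
    rw [← h]
    refine Finset.sum_congr rfl fun j _ => ?_
    have : (Matrix.of fun i j => g j ((Fin.cons x Z : Fin (n + 1) → E) i)).submatrix
        Fin.succ j.succAbove = Matrix.of fun i l : Fin n => g (j.succAbove l) (Z i) := by
      ext i l; simp
    rw [this]
    simp
    ring

lemma aux_castLE {E : Type} [MeasurableSpace E] (ν : Measure E) [IsProbabilityMeasure ν]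
    (n N : ℕ) (hnN : n ≤ N) (S : Set (Fin n → E)) (h : ∀ᵐ X ∂(Measure.pi fun _ : Fin n => ν), X ∈ S) :
    ∀ᵐ X ∂(Measure.pi fun _ : Fin N => ν), (fun i => X (Fin.castLE hnN i)) ∈ S := by
  have hme : Measurable (fun (X : Fin N → E) (i : Fin n) => X (Fin.castLE hnN i)) :=
    measurable_pi_iff.2 fun i => measurable_pi_apply _
  have : Measure.pi (fun _ : Fin n => ν) =
      (Measure.pi fun _ : Fin N => ν).map (fun X i => X (Fin.castLE hnN i)) := by
    refine Measure.pi_eq fun s hs => ?_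
    rw [Measure.map_apply hme (MeasurableSet.univ_pi hs)]
    have : (fun (X : Fin N → E) (i : Fin n) => X (Fin.castLE hnN i)) ⁻¹' Set.univ.pi s =
        Set.univ.pi (fun j : Fin N => if hj : (j : ℕ) < n then s ⟨j, hj⟩ else Set.univ) := by
      ext X
      simp only [Set.mem_preimage, Set.mem_pi, Set.mem_univ, true_imp_iff]
      constructor
      · intro h j
        split_ifs with hj
        · exact h ⟨j, hj⟩
        · trivial
      · intro h i
        have := h (Fin.castLE hnN i)
        simpa using this
    rw [this, Measure.pi_pi]
    obtain ⟨r, rfl⟩ := Nat.exists_eq_add_of_le hnN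
    rw [Fin.prod_univ_add]
    simp
  rw [this] at h
  exact ae_of_ae_map hme.aemeasurable h

lemma aux_mv_ne : ∀ (d : ℕ) (p : MvPolynomial (Fin d) ℝ), p ≠ 0 →
    ∀ᵐ x ∂(volume : Measure (Fin d → ℝ)), MvPolynomial.eval x p ≠ 0 := by
  intro d
  induction d with
  | zero =>
    intro p hp
    refine ae_of_all _ fun x h => hp ?_
    rw [MvPolynomial.eq_C_of_isEmpty p] at h ⊢
    simp at h
    simp [h]
  | succ d ih =>
    intro p hp
    rw [volume_pi]
    refine aux_ae_pi_succ volume d {x | MvPolynomial.eval x p ≠ 0} ?_ ?_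
    · exact (MvPolynomial.continuous_eval p).measurable (measurableSet_singleton 0).compl
    · have hp' : MvPolynomial.finSuccEquiv ℝ d p ≠ 0 := by simpa using hp
      have := ih _ (Polynomial.leadingCoeff_ne_zero.2 hp')
      rw [volume_pi] at this
      filter_upwards [this] with Z hZ
      have hq : Polynomial.map (MvPolynomial.eval Z) (MvPolynomial.finSuccEquiv ℝ d p) ≠ 0 := by
        intro h
        apply hZ
        have := congrArg (fun q => q.coeff (MvPolynomial.finSuccEquiv ℝ d p).natDegree) h
        simpa using this
      simp only [MvPolynomial.eval_eq_eval_mv_eval']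
      have hf := (Polynomial.map (MvPolynomial.eval Z)
        (MvPolynomial.finSuccEquiv ℝ d p)).roots.toFinset.finite_toSet
      have := (hf.measure_zero (volume : Measure ℝ))
      rw [measure_eq_zero_iff_ae_notMem] at this
      filter_upwards [this] with x hx h
      apply hx
      simp [hq, h]

lemma aux_aeval_deg {d : ℕ} (Q : Polynomial ℝ) (r : MvPolynomial (Fin d) ℝ) (D : ℕ)
    (hr : r.totalDegree ≤ D) : (Polynomial.aeval r Q).totalDegree ≤ Q.natDegree * D := by
  rw [Polynomial.aeval_eq_sum_range]
  refine MvPolynomial.totalDegree_finsetSum_le fun i hi => ?_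
  refine (MvPolynomial.totalDegree_smul_le _ _).trans ?_
  refine (MvPolynomial.totalDegree_pow _ _).trans ?_
  exact Nat.mul_le_mul (by simpa [Nat.lt_succ_iff] using hi) hr

lemma aux_layer {d m n : ℕ} (Q : Polynomial ℝ) (W : Matrix (Fin m) (Fin n) ℝ)
    (p : Fin n → MvPolynomial (Fin d) ℝ) (D : ℕ) (hp : ∀ j, (p j).totalDegree ≤ D) :
    ∃ q : Fin m → MvPolynomial (Fin d) ℝ, (∀ j, (q j).totalDegree ≤ Q.natDegree * D) ∧
      ∀ x j, MvPolynomial.eval x (q j) =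
        applyLayer (fun y => Q.eval y) W (fun i => MvPolynomial.eval x (p i)) j := by
  refine ⟨fun j => Polynomial.aeval (∑ i, W j i • p i) Q, fun j => ?_, fun x j => ?_⟩
  · refine aux_aeval_deg _ _ _ (MvPolynomial.totalDegree_finsetSum_le fun i _ => ?_)
    exact (MvPolynomial.totalDegree_smul_le _ _).trans (hp i)
  · have : MvPolynomial.eval x (Polynomial.aeval (∑ i, W j i • p i) Q)
        = MvPolynomial.aeval x (Polynomial.aeval (∑ i, W j i • p i) Q) := by
      exact (congrArg (fun g : MvPolynomial (Fin d) ℝ →+* ℝ => g _)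
        (MvPolynomial.coe_aeval_eq_eval x)).symm
    rw [this, ← Polynomial.aeval_algHom_apply]
    simp [applyLayer, MvPolynomial.coe_aeval_eq_eval, Polynomial.coe_aeval_eq_eval]

lemma aux_iter {d m : ℕ} (Q : Polynomial ℝ) (p : Fin m → MvPolynomial (Fin d) ℝ) (D : ℕ)
    (hp : ∀ j, (p j).totalDegree ≤ D) :
    ∀ (n : ℕ) (Ws : Fin n → Matrix (Fin m) (Fin m) ℝ),
    ∃ q : Fin m → MvPolynomial (Fin d) ℝ, (∀ j, (q j).totalDegree ≤ Q.natDegree ^ n * D) ∧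
      ∀ x j, MvPolynomial.eval x (q j) =
        iterLayers (fun y => Q.eval y) n Ws (fun i => MvPolynomial.eval x (p i)) j := by
  intro n
  induction n with
  | zero => intro Ws; exact ⟨p, by simpa using hp, fun x j => rfl⟩
  | succ n ih =>
    intro Ws
    obtain ⟨q, hq, hq'⟩ := ih (fun i => Ws i.castSucc)
    obtain ⟨r, hr, hr'⟩ := aux_layer Q (Ws (Fin.last n)) q _ hq
    refine ⟨r, fun j => (hr j).trans (by rw [pow_succ]; apply le_of_eq; ring), fun x j => ?_⟩
    rw [hr']
    simp only [iterLayers]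
    congr 1
    funext i
    exact hq' x i

lemma aux_nn {d m n : ℕ} (Q : Polynomial ℝ) (a : Fin m → ℝ) (W1 : Matrix (Fin m) (Fin d) ℝ)
    (Ws : Fin n → Matrix (Fin m) (Fin m) ℝ) :
    ∃ q : MvPolynomial (Fin d) ℝ, q.totalDegree ≤ Q.natDegree ^ (n + 1) ∧
      ∀ x, MvPolynomial.eval x q = nnFun (fun y => Q.eval y) a W1 Ws x := by
  obtain ⟨p, hp, hp'⟩ := aux_layer (d := d) Q W1 (fun i => MvPolynomial.X i) 1
    (fun j => (MvPolynomial.totalDegree_X j).le)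
  obtain ⟨q, hq, hq'⟩ := aux_iter Q p _ hp n Ws
  refine ⟨∑ j, a j • q j, MvPolynomial.totalDegree_finsetSum_le fun j _ => ?_, fun x => ?_⟩
  · refine (MvPolynomial.totalDegree_smul_le _ _).trans ((hq j).trans ?_)
    rw [pow_succ, mul_one]
  · simp only [map_sum, MvPolynomial.smul_eval, hq', nnFun]
    refine Finset.sum_congr rfl fun j _ => ?_
    congr 2
    funext i
    rw [hp']
    simp

/-- the index set -/
def auxC (d M : ℕ) : Finset (Fin d → ℕ) :=
  (Fintype.piFinset fun _ : Fin d => Finset.range (M + 1)).filter (fun α => ∑ i, α i ≤ M)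

lemma aux_mem (d M : ℕ) (α : Fin d → ℕ) : α ∈ auxC d M ↔ ∑ i, α i ≤ M := by
  simp only [auxC, Finset.mem_filter, Fintype.mem_piFinset, Finset.mem_range, and_iff_right_iff_imp]
  intro h i
  have := Finset.single_le_sum (f := α) (fun i _ => Nat.zero_le _) (Finset.mem_univ i)
  omega

lemma aux_card (d M : ℕ) :
    (auxC d M).card ≤ ∑ t ∈ Finset.range (M + 1), (d + t - 1).choose t := by
  have hsub : auxC d M ⊆ (Finset.range (M + 1)).biUnion fun t =>
      ((Finset.univ : Finset (Fin d)).finsuppAntidiag t).image (fun f : Fin d →₀ ℕ => (f : Fin d → ℕ)) := by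
    intro α hα
    rw [aux_mem] at hα
    simp only [Finset.mem_biUnion, Finset.mem_range, Finset.mem_image, Finset.mem_finsuppAntidiag]
    exact ⟨∑ i, α i, by omega, Finsupp.equivFunOnFinite.symm α, ⟨by simp, by simp⟩, by simp⟩
  refine (Finset.card_le_card hsub).trans (Finset.card_biUnion_le.trans ?_)
  refine Finset.sum_le_sum fun t _ => Finset.card_image_le.trans ?_
  rw [Finset.card_finsuppAntidiag_nat_eq_choose]
  simp

/-- polynomial of coefficients -/
def auxP {d : ℕ} (C : Finset (Fin d → ℕ)) (q : (Fin d → ℕ) → ℝ) : MvPolynomial (Fin d) ℝ :=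
  ∑ α ∈ C, MvPolynomial.monomial (Finsupp.equivFunOnFinite.symm α) (q α)

lemma auxP_eval {d : ℕ} (C : Finset (Fin d → ℕ)) (q : (Fin d → ℕ) → ℝ) (x : Fin d → ℝ) :
    MvPolynomial.eval x (auxP C q) = ∑ α ∈ C, q α * monom α x := by
  simp [auxP, MvPolynomial.eval_monomial, monom, Finsupp.prod_fintype]

lemma auxP_coeff {d : ℕ} (C : Finset (Fin d → ℕ)) (q : (Fin d → ℕ) → ℝ) (α : Fin d → ℕ)
    (hα : α ∈ C) : (auxP C q).coeff (Finsupp.equivFunOnFinite.symm α) = q α := by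
  simp [auxP, MvPolynomial.coeff_sum, MvPolynomial.coeff_monomial, hα]

lemma aux_repr {d M : ℕ} (p : MvPolynomial (Fin d) ℝ) (hp : p.totalDegree ≤ M) :
    auxP (auxC d M) (fun α => p.coeff (Finsupp.equivFunOnFinite.symm α)) = p := by
  ext s
  by_cases hs : ∑ i, s i ≤ M
  · have := auxP_coeff (auxC d M) (fun α => p.coeff (Finsupp.equivFunOnFinite.symm α)) s
      ((aux_mem _ _ _).2 hs)
    simpa using this
  · rw [MvPolynomial.coeff_eq_zero_of_totalDegree_lt (f := p)]
    · simp only [auxP, MvPolynomial.coeff_sum, MvPolynomial.coeff_monomial]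
      refine Finset.sum_eq_zero fun α hα => ?_
      rw [if_neg]
      rintro rfl
      rw [aux_mem] at hα
      exact hs (by simpa using hα)
    · refine lt_of_le_of_lt hp ?_
      have : ∑ i ∈ s.support, s i = ∑ i, s i :=
        Finset.sum_subset (Finset.subset_univ _) (by simp)
      omega

lemma aux_inj {d : ℕ} (ν : Measure (Fin d → ℝ)) [IsProbabilityMeasure ν]
    (hac : ν ≪ (volume : Measure (Fin d → ℝ))) (C : Finset (Fin d → ℕ)) (N : ℕ)
    (hN : C.card ≤ N) :
    ∀ᵐ X ∂(Measure.pi fun _ : Fin N => ν), ∀ q : (Fin d → ℕ) → ℝ,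
      (∀ i, ∑ α ∈ C, q α * monom α (X i) = 0) → ∀ α ∈ C, q α = 0 := by
  let e := C.equivFin
  have hsum : ∀ (q : (Fin d → ℕ) → ℝ) (x : Fin d → ℝ), ∑ α ∈ C, q α * monom α x =
      ∑ j : Fin C.card, q (e.symm j).1 * monom (e.symm j).1 x := by
    intro q x
    rw [← Finset.sum_coe_sort C, ← e.symm.sum_comp]
  have h1 := aux_det_ne ν C.card (fun j => monom (e.symm j).1) (by
      intro j
      unfold monom
      fun_prop) (by
      intro c hc
      let q : (Fin d → ℕ) → ℝ := fun α => if h : α ∈ C then c (e ⟨α, h⟩) else 0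
      have hq : ∀ j, q (e.symm j).1 = c j := by intro j; simp [q]
      have hP : auxP C q ≠ 0 := by
        intro h
        apply hc
        funext j
        rw [← hq, ← auxP_coeff C q _ (e.symm j).2, h]
        simp
      filter_upwards [hac.ae_le (aux_mv_ne d _ hP)] with x hx
      rw [auxP_eval, hsum] at hx
      simpa only [hq] using hx)
  have h2 := aux_castLE ν _ N hN {X | Matrix.det (Matrix.of fun i j : Fin C.card =>
    monom (e.symm j).1 (X i)) ≠ 0} h1
  filter_upwards [h2] with X hX q hq
  have h3 := Matrix.eq_zero_of_mulVec_eq_zero hX (v := fun j => q (e.symm j).1) (by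
    funext i
    have := hq (Fin.castLE hN i)
    rw [hsum] at this
    simp only [Matrix.mulVec, dotProduct, Matrix.of_apply, Pi.zero_apply]
    rw [← this]
    exact Finset.sum_congr rfl fun j _ => mul_comm _ _)
  intro α hα
  have := congrFun h3 (e ⟨α, hα⟩)
  simpa using this

/-- For a polynomial activation of degree `k` and i.i.d. jointly continuous
inputs, as soon as `N ≥ Σ_{t=0}^{k^L} C(d+t−1, t)`, with probability one any tensor-OLS
minimizer over all multi-indices of total degree at most `k^L` recovers the depth-`L`
teacher network exactly. -/
theorem polynomial_network_exact_recovery_continuous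
    (d m L N k : ℕ) (hL : 1 ≤ L)
    (Q : Polynomial ℝ) (hQ : Q.natDegree = k)
    (ν : Measure (Fin d → ℝ)) (hν : IsProbabilityMeasure ν)
    (hac : ν ≪ (volume : Measure (Fin d → ℝ)))
    (a : Fin m → ℝ) (W1 : Matrix (Fin m) (Fin d) ℝ)
    (Ws : Fin (L - 1) → Matrix (Fin m) (Fin m) ℝ)
    (hN : N ≥ ∑ t ∈ Finset.range (k ^ L + 1), (d + t - 1).choose t) :
    (Measure.pi fun _ : Fin N => ν)
      {X | ∀ qh : (Fin d → ℕ) → ℝ,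
        (∀ q : (Fin d → ℕ) → ℝ,
          ∑ i : Fin N, (nnFun Q.eval a W1 Ws (X i)
              - ∑ α ∈ (Fintype.piFinset fun _ : Fin d => Finset.range (k ^ L + 1)).filter
                  (fun α => ∑ i, α i ≤ k ^ L), qh α * monom α (X i)) ^ 2
            ≤ ∑ i : Fin N, (nnFun Q.eval a W1 Ws (X i)
              - ∑ α ∈ (Fintype.piFinset fun _ : Fin d => Finset.range (k ^ L + 1)).filter
                  (fun α => ∑ i, α i ≤ k ^ L), q α * monom α (X i)) ^ 2) →
        ∀ x : Fin d → ℝ,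
          ∑ α ∈ (Fintype.piFinset fun _ : Fin d => Finset.range (k ^ L + 1)).filter
              (fun α => ∑ i, α i ≤ k ^ L), qh α * monom α x
            = nnFun Q.eval a W1 Ws x} = 1 := by
  obtain ⟨p, hp, hpe⟩ := aux_nn (n := L - 1) Q a W1 Ws
  rw [hQ, Nat.sub_add_cancel hL] at hp
  have hae := aux_inj ν hac (auxC d (k ^ L)) N ((aux_card d _).trans hN)
  have hpr : (Measure.pi fun _ : Fin N => ν) Set.univ = 1 := measure_univ
  rw [← hpr]
  refine measure_congr (Filter.eventuallyEq_univ.2 ?_)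
  filter_upwards [hae] with X hX qh hmin
  set q₀ : (Fin d → ℕ) → ℝ := fun α => p.coeff (Finsupp.equivFunOnFinite.symm α) with hq₀
  have hf : ∀ x, nnFun (fun y => Q.eval y) a W1 Ws x
      = ∑ α ∈ auxC d (k ^ L), q₀ α * monom α x := by
    intro x
    rw [← hpe, ← auxP_eval, aux_repr p hp]
  change ∀ q : (Fin d → ℕ) → ℝ, ∑ i : Fin N, (nnFun (fun y => Q.eval y) a W1 Ws (X i)
      - ∑ α ∈ auxC d (k ^ L), qh α * monom α (X i)) ^ 2
      ≤ ∑ i : Fin N, (nnFun (fun y => Q.eval y) a W1 Ws (X i)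
      - ∑ α ∈ auxC d (k ^ L), q α * monom α (X i)) ^ 2 at hmin
  change ∀ x, ∑ α ∈ auxC d (k ^ L), qh α * monom α x = nnFun (fun y => Q.eval y) a W1 Ws x
  have h0 := hmin q₀
  simp only [hf, sub_self, ne_eq, OfNat.ofNat_ne_zero, not_false_eq_true, zero_pow,
    Finset.sum_const_zero] at h0
  have h1 := (Finset.sum_eq_zero_iff_of_nonneg (fun i _ => sq_nonneg _)).1
    (le_antisymm h0 (Finset.sum_nonneg fun i _ => sq_nonneg _))
  have h2 := hX (fun α => q₀ α - qh α) (fun i => by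
    have := pow_eq_zero_iff (two_ne_zero) |>.1 (h1 i (Finset.mem_univ i))
    rw [← Finset.sum_sub_distrib] at this
    rw [← this]
    exact Finset.sum_congr rfl fun α _ => by ring)
  intro x
  rw [hf]
  refine Finset.sum_congr rfl fun α hα => ?_
  rw [sub_eq_zero.1 (h2 α hα)]

end
end

section
/- Let σ be an admissible activation with order of approximation φ_σ, let X^(1),…,X^(N) be i.i.d. samples from an admissible distribution P^⊗d on [-1,1]^d, and let Y_i = f_{N1}(W*, X^(i)) be labels from an L-layer teacher network N1 of width m* whose weights satisfy ‖a*‖_{ℓ1} ≤ 1 and ‖W*_{p,j}‖_{ℓ1} ≤ 1 for all layers p and rows j. Let N2 be a student network of depth L and width m̂ ≥ m* whose weights Ŵ satisfy ‖â‖_{ℓ1} ≤ 1 and ‖Ŵ_{k,j}‖_{ℓ1} ≤ 1 for all k ∈ [L] and rows j, and which interpolates the data: f_{N2}(Ŵ, X^(i)) = Y_i for all i ∈ [N]. Fix ε > 0 and set M = (φ_σ(√(ε/16L²)))^L. Then there is an absolute constant c > 0 such that, provided N ≥ 2^{24} ε^{−6} exp(96 log(d) · M) · C(P, M)^{18}, with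 probability at least 1 − exp(−c N^{1/4}) over the training samples, E[(f_{N1}(W*, X) − f_{N2}(Ŵ, X))²] ≤ ε, where the expectation is over a fresh sample X from P^⊗d. -/
open MeasureTheory Polynomial Matrix
open scoped Classical

noncomputable section

/-! ### Positivity of Hankel determinants -/

lemma measSupport_zero {P : Measure ℝ} {f : ℝ → ℝ} (hf : Continuous f)
    (h : ∀ᵐ x ∂P, f x = 0) {x : ℝ} (hx : x ∈ measSupport P) : f x = 0 := by
  by_contra hne
  have : {y | f y ≠ 0} ∈ nhds x := (isOpen_ne_fun hf continuous_const).mem_nhds hne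
  exact hx _ this (ae_iff.1 h)

lemma admissible_ae {P : Measure ℝ} (hP : AdmissibleDist P) : ∀ᵐ x ∂P, |x| ≤ 1 := by
  have := hP.1
  have := (prob_compl_eq_zero_iff (μ := P) (measurableSet_Icc (a := (-1 : ℝ)) (b := 1))).2 hP.2.1
  rw [ae_iff]
  convert this using 2
  ext x
  simp [abs_le]

lemma integrable_poly {P : Measure ℝ} (hP : AdmissibleDist P) {f : ℝ → ℝ} (hf : Continuous f) :
    Integrable f P := by
  have := hP.1
  obtain ⟨C, hC⟩ := (isCompact_Icc (a := (-1 : ℝ)) (b := 1)).exists_bound_of_continuousOn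
    hf.continuousOn
  refine Integrable.of_bound hf.aestronglyMeasurable C ?_
  filter_upwards [admissible_ae hP] with x hx
  exact hC x (abs_le.1 hx)

lemma Dn_pos {P : Measure ℝ} (hP : AdmissibleDist P) {n : ℕ}
    (hn : (measSupport P).Finite → n + 1 ≤ (measSupport P).ncard) : 0 < Dn P n := by
  have := hP.1
  refine Matrix.PosDef.det_pos (Matrix.PosDef.of_dotProduct_mulVec_pos ?_ ?_)
  · ext i j
    simp [add_comm]
  · intro v hv
    set q : Polynomial ℝ := ∑ i : Fin (n + 1), Polynomial.C (v i) * Polynomial.X ^ (i : ℕ) with hq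
    have hqe : ∀ x, q.eval x = ∑ i : Fin (n + 1), v i * x ^ (i : ℕ) := by
      intro x; simp [hq, Polynomial.eval_finsetSum]
    have hval : star v ⬝ᵥ (Matrix.of fun i j : Fin (n + 1) =>
        momentP P ((i : ℕ) + (j : ℕ))).mulVec v = ∫ x, (q.eval x) ^ 2 ∂P := by
      have : ∀ x, (q.eval x) ^ 2 =
          ∑ i : Fin (n + 1), ∑ j : Fin (n + 1), v i * v j * x ^ ((i : ℕ) + (j : ℕ)) := by
        intro x
        rw [hqe, sq, Finset.sum_mul_sum]
        refine Finset.sum_congr rfl fun i _ => Finset.sum_congr rfl fun j _ => by ring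
      simp_rw [this]
      rw [integral_finsetSum _ fun i _ => integrable_poly hP (by fun_prop)]
      simp only [dotProduct, Matrix.mulVec, Finset.mul_sum]
      refine Finset.sum_congr rfl fun i _ => ?_
      rw [integral_finsetSum _ fun i _ => integrable_poly hP (by fun_prop)]
      refine Finset.sum_congr rfl fun j _ => ?_
      rw [integral_const_mul]
      simp [momentP]; ring
    rw [hval]
    have hint : Integrable (fun x => (q.eval x) ^ 2) P := integrable_poly hP (by fun_prop)
    refine lt_of_le_of_ne (integral_nonneg fun x => sq_nonneg _) fun h0 => hv ?_
    have hz := (integral_eq_zero_iff_of_nonneg (fun x => sq_nonneg _) hint).1 h0.symm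
    have hq0 : q = 0 := by
      by_contra hne
      have hsub : measSupport P ⊆ (q.roots.toFinset : Set ℝ) := by
        intro x hx
        have : (q.eval x) ^ 2 = 0 :=
          measSupport_zero (f := fun x => (q.eval x) ^ 2) (by fun_prop) hz hx
        simp only [Finset.mem_coe, Multiset.mem_toFinset, Polynomial.mem_roots', ne_eq]
        exact ⟨hne, by simpa using this⟩
      have hfin : (measSupport P).Finite := (Finset.finite_toSet _).subset hsub
      have h1 := Set.ncard_le_ncard hsub (Finset.finite_toSet _)
      rw [Set.ncard_coe_finset] at h1
      have h2 := q.roots.toFinset_card_le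
      have h3 := q.card_roots'
      have h4 : q.natDegree ≤ n := by
        refine Polynomial.natDegree_sum_le_of_forall_le _ _ fun i _ => ?_
        exact (Polynomial.natDegree_C_mul_X_pow_le _ _).trans (by omega)
      have := hn hfin
      omega
    funext i
    have : q.coeff (i : ℕ) = v i := by
      simp only [hq, Polynomial.finsetSum_coeff, Polynomial.coeff_C_mul, Polynomial.coeff_X_pow]
      rw [Finset.sum_eq_single i]
      · simp
      · intro j _ hj
        have : (i : ℕ) ≠ (j : ℕ) := fun h => hj (Fin.ext h.symm)
        simp [this]
      · simp
    rw [← this, hq0]; simp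

lemma Dn_ratio_pos {P : Measure ℝ} (hP : AdmissibleDist P) {k i : ℕ}
    (hi : i ∈ Set.Icc 1 (omegaP P k)) : 0 < Dn P i / Dn P (i - 1) := by
  have h1 := hi.1
  have h2 := hi.2
  unfold omegaP at h2
  refine div_pos (Dn_pos hP ?_) (Dn_pos hP ?_) <;>
  · intro hf
    rw [if_pos hf] at h2
    have := h2.trans (min_le_left _ _)
    omega

lemma one_le_CPk {P : Measure ℝ} (hP : AdmissibleDist P) (k : ℕ) : 1 ≤ CPk P k := by
  have hmin : ∀ g : ℕ → ℝ, (∀ i ∈ Set.Icc 1 (omegaP P k), 0 < g i) →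
      0 < sInf (insert (1 : ℝ) (g '' Set.Icc 1 (omegaP P k))) ∧
      sInf (insert (1 : ℝ) (g '' Set.Icc 1 (omegaP P k))) ≤ 1 := by
    intro g hg
    have hfin : (insert (1 : ℝ) (g '' Set.Icc 1 (omegaP P k))).Finite :=
      ((Set.finite_Icc _ _).image _).insert _
    refine ⟨?_, csInf_le hfin.bddBelow (Set.mem_insert _ _)⟩
    rcases (Set.insert_nonempty _ _).csInf_mem hfin with h | ⟨i, hi, h⟩
    · rw [h]; norm_num
    · rw [← h]; exact hg i hi
  have hmax : 1 ≤ ratioMaxK P k :=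
    le_csSup ((((Set.finite_Icc _ _).image _).insert _).bddAbove) (Set.mem_insert _ _)
  obtain ⟨c1, c2⟩ := hmin _ fun i hi => Real.rpow_pos_of_pos (Dn_ratio_pos hP hi) ((k : ℝ) / 2)
  obtain ⟨r1, r2⟩ := hmin _ fun i hi => pow_pos (Dn_ratio_pos hP hi) k
  change 0 < cPk P k at c1
  change cPk P k ≤ 1 at c2
  change 0 < ratioMinK P k at r1
  change ratioMinK P k ≤ 1 at r2
  rw [CPk, le_div_iff₀ c1, fPk]
  refine le_trans (by linarith : 1 * cPk P k ≤ 1) ?_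
  rw [le_div_iff₀ r1]
  have : 1 ≤ max (momentP P (2 * omegaP P k) ^ k) 1 := le_max_right _ _
  nlinarith

/-! ### Rademacher averages -/

def sgn' (b : Bool) : ℝ := if b then 1 else -1

def radSum {N : ℕ} (e : Fin N → Bool) (v : Fin N → ℝ) : ℝ := ∑ k, sgn' (e k) * v k

def RadV {N : ℕ} {ι : Type*} (t : ι → Fin N → ℝ) (A κ : ℝ) : Prop :=
  ∀ (l : ℝ) (s : (Fin N → Bool) → ι),
    ∑ e, Real.exp (l * radSum e (t (s e))) ≤ 2 ^ N * (A * Real.exp (κ * l ^ 2 * N))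

lemma exp_two_point_aux {a1 a2 b1 b2 f1 f2 : ℝ}
    (h1 : |f1| ≤ |b1|) (h2 : |f2| ≤ |b2|) (h12 : |f1 - f2| ≤ |b1 - b2|)
    (hb1 : 0 ≤ b1) (hb2 : 0 ≤ b2)
    (c1 : a2 + f2 ≤ a1 + f1) (c2 : a1 - f1 ≤ a2 - f2) :
    Real.exp (a1 + f1) + Real.exp (a2 - f2) ≤ Real.exp (a1 + b1) + Real.exp (a2 - b2) ∨
    Real.exp (a1 + f1) + Real.exp (a2 - f2) ≤ Real.exp (a2 + b2) + Real.exp (a1 - b1) := by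
  rw [abs_of_nonneg hb1] at h1
  rw [abs_of_nonneg hb2] at h2
  have h1' := abs_le.1 h1
  have h2' := abs_le.1 h2
  rcases le_total b2 b1 with h | h
  · left
    rw [abs_of_nonneg (sub_nonneg.2 h)] at h12
    have h12' := abs_le.1 h12
    have e1 : Real.exp (a1 + b1) = Real.exp (a1 + f1) * Real.exp (b1 - f1) := by
      rw [← Real.exp_add]; ring_nf
    have e2 : Real.exp (a2 - f2) = Real.exp (a2 - b2) * Real.exp (b2 - f2) := by
      rw [← Real.exp_add]; ring_nf
    have g1 : Real.exp (a2 - b2) ≤ Real.exp (a1 + f1) := Real.exp_le_exp.2 (by linarith)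
    have g2 : Real.exp (b2 - f2) ≤ Real.exp (b1 - f1) := Real.exp_le_exp.2 (by linarith)
    have g3 : 1 ≤ Real.exp (b2 - f2) := Real.one_le_exp (by linarith)
    have := mul_le_mul g1 (sub_le_sub_right g2 1) (by linarith) (Real.exp_pos _).le
    rw [e1, e2]; linarith
  · right
    rw [abs_sub_comm, abs_sub_comm b1, abs_of_nonneg (sub_nonneg.2 h)] at h12
    have h12' := abs_le.1 h12
    have e1 : Real.exp (a2 + b2) = Real.exp (a2 - f2) * Real.exp (b2 + f2) := by
      rw [← Real.exp_add]; ring_nf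
    have e2 : Real.exp (a1 + f1) = Real.exp (a1 - b1) * Real.exp (b1 + f1) := by
      rw [← Real.exp_add]; ring_nf
    have g1 : Real.exp (a1 - b1) ≤ Real.exp (a2 - f2) := Real.exp_le_exp.2 (by linarith)
    have g2 : Real.exp (b1 + f1) ≤ Real.exp (b2 + f2) := Real.exp_le_exp.2 (by linarith)
    have g3 : 1 ≤ Real.exp (b1 + f1) := Real.one_le_exp (by linarith)
    have := mul_le_mul g1 (sub_le_sub_right g2 1) (by linarith) (Real.exp_pos _).le
    rw [e1, e2]; linarith

lemma exp_cosh_aux {a b f : ℝ} (h : |f| ≤ |b|) :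
    Real.exp (a + f) + Real.exp (a - f) ≤ Real.exp (a + b) + Real.exp (a - b) := by
  have e : ∀ x : ℝ, Real.exp (a + x) + Real.exp (a - x) = 2 * Real.exp a * Real.cosh x := by
    intro x
    rw [Real.cosh_eq, sub_eq_add_neg, Real.exp_add, Real.exp_add]; ring
  rw [e, e]
  exact mul_le_mul_of_nonneg_left (Real.cosh_le_cosh.2 h) (by positivity)

/-- Two-point comparison lemma behind the contraction principle. -/
lemma exp_two_point {ι : Type*} (a b f : ι → ℝ) (i j : ι)
    (hf : ∀ i, |f i| ≤ |b i|) (hff : ∀ i j, |f i - f j| ≤ |b i - b j|) :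
    ∃ i' j', Real.exp (a i + f i) + Real.exp (a j - f j) ≤
      Real.exp (a i' + b i') + Real.exp (a j' - b j') := by
  by_cases c1 : a j + f j ≤ a i + f i
  swap
  · refine ⟨j, j, ?_⟩
    have : Real.exp (a i + f i) ≤ Real.exp (a j + f j) := Real.exp_le_exp.2 (by linarith)
    have := exp_cosh_aux (a := a j) (hf j)
    linarith
  by_cases c2 : a i - f i ≤ a j - f j
  swap
  · refine ⟨i, i, ?_⟩
    have : Real.exp (a j - f j) ≤ Real.exp (a i - f i) := Real.exp_le_exp.2 (by linarith)
    have := exp_cosh_aux (a := a i) (hf i)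
    linarith
  have fi := abs_le.1 (hf i)
  have fj := abs_le.1 (hf j)
  rcases le_total 0 (b i) with hi | hi <;> rcases le_total 0 (b j) with hj | hj
  · rcases exp_two_point_aux (hf i) (hf j) (hff i j) hi hj c1 c2 with h | h
    · exact ⟨i, j, h⟩
    · exact ⟨j, i, h⟩
  · refine ⟨i, j, ?_⟩
    rw [abs_of_nonneg hi] at fi
    rw [abs_of_nonpos hj] at fj
    exact add_le_add (Real.exp_le_exp.2 (by linarith)) (Real.exp_le_exp.2 (by linarith))
  · refine ⟨j, i, ?_⟩
    rw [abs_of_nonpos hi] at fi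
    rw [abs_of_nonneg hj] at fj
    rw [add_comm]
    exact add_le_add (Real.exp_le_exp.2 (by linarith)) (Real.exp_le_exp.2 (by linarith))
  · have h12 : |f i - f j| ≤ |(-b i) - (-b j)| := by
      have := hff i j
      rwa [show -b i - -b j = -(b i - b j) by ring, abs_neg]
    rcases exp_two_point_aux (b1 := - b i) (b2 := - b j) (by rw [abs_neg]; exact hf i)
      (by rw [abs_neg]; exact hf j) h12 (by linarith) (by linarith) c1 c2 with h | h
    · refine ⟨j, i, ?_⟩
      rw [sub_neg_eq_add, ← sub_eq_add_neg] at h; linarith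
    · refine ⟨i, j, ?_⟩
      rw [sub_neg_eq_add, ← sub_eq_add_neg] at h; linarith

lemma sum_bool_split {N : ℕ} (j : Fin N) (F : (Fin N → Bool) → ℝ) :
    ∑ e, F e = ∑ e ∈ Finset.univ.filter (fun e : Fin N → Bool => e j = true),
      (F e + F (Function.update e j false)) := by
  rw [Finset.sum_add_distrib, ← Finset.sum_filter_add_sum_filter_not Finset.univ
    (fun e : Fin N → Bool => e j = true) F]
  congr 1
  refine Finset.sum_bij' (fun e _ => Function.update e j true)
    (fun e _ => Function.update e j false) ?_ ?_ ?_ ?_ ?_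
  · intro e he; simp
  · intro e he; simp
  · intro e he
    simp only [Finset.mem_filter, Finset.mem_univ, true_and, Bool.not_eq_true] at he
    simp [← he]
  · intro e he
    simp only [Finset.mem_filter, Finset.mem_univ, true_and] at he
    simp [← he]
  · intro e he
    simp only [Finset.mem_filter, Finset.mem_univ, true_and, Bool.not_eq_true] at he
    simp [← he]

lemma contraction_one {N : ℕ} {ι : Type*} (u v : ι → Fin N → ℝ) (j : Fin N)
    (huv : ∀ i k, k ≠ j → u i k = v i k)
    (hf : ∀ i, |u i j| ≤ |v i j|) (hff : ∀ i i', |u i j - u i' j| ≤ |v i j - v i' j|)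
    (s : (Fin N → Bool) → ι) :
    ∃ s' : (Fin N → Bool) → ι,
      ∑ e, Real.exp (radSum e (u (s e))) ≤ ∑ e, Real.exp (radSum e (v (s' e))) := by
  have key : ∀ e : Fin N → Bool, ∃ p : ι × ι, e j = true →
      Real.exp (radSum e (u (s e))) + Real.exp (radSum (Function.update e j false)
        (u (s (Function.update e j false)))) ≤
      Real.exp (radSum e (v p.1)) + Real.exp (radSum (Function.update e j false) (v p.2)) := by
    intro e
    by_cases he : e j = true
    swap
    · exact ⟨(s e, s e), fun h => absurd h he⟩
    set A : ι → ℝ := fun i => ∑ k ∈ Finset.univ.erase j, sgn' (e k) * v i k with hA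
    have r1 : ∀ w : ι → Fin N → ℝ, (∀ i k, k ≠ j → w i k = v i k) → ∀ i,
        radSum e (w i) = A i + w i j := by
      intro w hw i
      rw [radSum, ← Finset.sum_erase_add _ _ (Finset.mem_univ j), he]
      simp only [sgn', hA, if_true, one_mul]
      congr 1
      refine Finset.sum_congr rfl fun k hk => ?_
      rw [hw i k (Finset.ne_of_mem_erase hk)]
    have r2 : ∀ w : ι → Fin N → ℝ, (∀ i k, k ≠ j → w i k = v i k) → ∀ i,
        radSum (Function.update e j false) (w i) = A i - w i j := by
      intro w hw i
      rw [radSum, ← Finset.sum_erase_add _ _ (Finset.mem_univ j)]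
      simp only [sgn', hA, Function.update_self]
      rw [sub_eq_add_neg]
      congr 1
      · refine Finset.sum_congr rfl fun k hk => ?_
        rw [hw i k (Finset.ne_of_mem_erase hk), Function.update_of_ne (Finset.ne_of_mem_erase hk)]
      · simp
    obtain ⟨i', j', h⟩ := exp_two_point A (fun i => v i j) (fun i => u i j) (s e)
      (s (Function.update e j false)) hf hff
    refine ⟨(i', j'), fun _ => ?_⟩
    rw [r1 u huv, r2 u huv, r1 v (fun _ _ _ => rfl), r2 v (fun _ _ _ => rfl)]
    exact h
  choose p hp using key
  refine ⟨fun e => if e j = true then (p e).1 else (p (Function.update e j true)).2, ?_⟩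
  rw [sum_bool_split j, sum_bool_split j]
  refine Finset.sum_le_sum fun e he => ?_
  simp only [Finset.mem_filter, Finset.mem_univ, true_and] at he
  refine (hp e he).trans (le_of_eq ?_)
  have : Function.update e j true = e := by rw [← he]; simp
  simp [he, this]

lemma contraction_all {N : ℕ} {ι : Type*} (u v : ι → Fin N → ℝ)
    (hf : ∀ i k, |u i k| ≤ |v i k|) (hff : ∀ i i' k, |u i k - u i' k| ≤ |v i k - v i' k|)
    (s : (Fin N → Bool) → ι) :
    ∃ s' : (Fin N → Bool) → ι,
      ∑ e, Real.exp (radSum e (u (s e))) ≤ ∑ e, Real.exp (radSum e (v (s' e))) := by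
  have key : ∀ S : Finset (Fin N), ∀ s : (Fin N → Bool) → ι, ∃ s' : (Fin N → Bool) → ι,
      ∑ e, Real.exp (radSum e (fun k => if k ∈ S then u (s e) k else v (s e) k)) ≤
        ∑ e, Real.exp (radSum e (v (s' e))) := by
    intro S
    induction S using Finset.induction_on with
    | empty => intro s; exact ⟨s, by simp⟩
    | insert j S hj ih =>
      intro s
      obtain ⟨s1, h1⟩ := contraction_one
        (fun i k => if k ∈ insert j S then u i k else v i k)
        (fun i k => if k ∈ S then u i k else v i k) j
        (by intro i k hk; simp [Finset.mem_insert, hk])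
        (by intro i; simpa [hj] using hf i j) (by intro i i'; simpa [hj] using hff i i' j) s
      obtain ⟨s2, h2⟩ := ih s1
      exact ⟨s2, h1.trans h2⟩
  obtain ⟨s', h⟩ := key Finset.univ s
  exact ⟨s', by simpa using h⟩

lemma sum_exp_radSum_le {N : ℕ} (v : Fin N → ℝ) (c l : ℝ) (hv : ∀ k, |v k| ≤ c) :
    ∑ e, Real.exp (l * radSum e v) ≤ 2 ^ N * Real.exp (c ^ 2 / 2 * l ^ 2 * N) := by
  have h1 : ∀ e : Fin N → Bool, Real.exp (l * radSum e v) =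
      ∏ k, Real.exp (l * (sgn' (e k) * v k)) := by
    intro e; rw [radSum, Finset.mul_sum, Real.exp_sum]
  simp_rw [h1]
  rw [← Fintype.prod_sum (fun k b => Real.exp (l * (sgn' b * v k)))]
  · have h2 : ∀ k : Fin N, ∑ b : Bool, Real.exp (l * (sgn' b * v k)) ≤
        2 * Real.exp (c ^ 2 / 2 * l ^ 2) := by
      intro k
      have : ∑ b : Bool, Real.exp (l * (sgn' b * v k)) = 2 * Real.cosh (l * v k) := by
        simp [sgn', Real.cosh_eq]; ring
      rw [this]
      refine mul_le_mul_of_nonneg_left ((Real.cosh_le_exp_half_sq _).trans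
        (Real.exp_le_exp.2 ?_)) (by norm_num)
      have : (v k) ^ 2 ≤ c ^ 2 := by
        rw [← sq_abs]; exact pow_le_pow_left₀ (abs_nonneg _) (hv k) 2
      nlinarith [sq_nonneg l]
    refine (Finset.prod_le_prod (fun k _ => Finset.sum_nonneg fun b _ => (Real.exp_pos _).le)
      (fun k _ => h2 k)).trans (le_of_eq ?_)
    rw [Finset.prod_const, Finset.card_univ, Fintype.card_fin, mul_pow, ← Real.exp_nat_mul]
    ring_nf

lemma RadV.contraction {N : ℕ} {ι : Type*} {t : ι → Fin N → ℝ} {A κ : ℝ} (h : RadV t A κ)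
    (hA : 1 ≤ A) (hκ : 1 / 2 ≤ κ) (u : ι → Fin N → ℝ) (b : Fin N → ℝ) (c : ℝ)
    (hb : ∀ k, |b k| ≤ c) (hub : ∀ i k, |u i k - b k| ≤ c * |t i k|)
    (huu : ∀ i i' k, |u i k - u i' k| ≤ c * |t i k - t i' k|) :
    RadV u A (4 * c ^ 2 * κ) := by
  intro l s
  rcases Nat.eq_zero_or_pos N with rfl | hN
  · simp [radSum]; exact hA
  have hc : 0 ≤ c := (abs_nonneg _).trans (hb ⟨0, hN⟩)
  have e1 : ∀ e, Real.exp (l * radSum e (u (s e))) ≤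
      (Real.exp (radSum e (fun k => 2 * l * (u (s e) k - b k))) +
        Real.exp (2 * l * radSum e b)) / 2 := by
    intro e
    have : l * radSum e (u (s e)) = (radSum e (fun k => 2 * l * (u (s e) k - b k)) +
        2 * l * radSum e b) / 2 := by
      simp only [radSum, Finset.mul_sum, ← Finset.sum_add_distrib, Finset.sum_div]
      exact Finset.sum_congr rfl fun k _ => by ring
    rw [this]
    set p := radSum e (fun k => 2 * l * (u (s e) k - b k))
    set q := 2 * l * radSum e b
    have e1 : Real.exp p = Real.exp (p / 2) ^ 2 := by rw [← Real.exp_nat_mul]; ring_nf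
    have e2 : Real.exp q = Real.exp (q / 2) ^ 2 := by rw [← Real.exp_nat_mul]; ring_nf
    rw [add_div, Real.exp_add, e1, e2]
    nlinarith [sq_nonneg (Real.exp (p / 2) - Real.exp (q / 2))]
  obtain ⟨s', hs'⟩ := contraction_all (fun i k => 2 * l * (u i k - b k))
    (fun i k => 2 * l * c * t i k)
    (by
      intro i k
      rw [abs_mul, abs_mul (2 * l * c), abs_mul (2 * l) c, abs_of_nonneg hc, mul_assoc]
      exact mul_le_mul_of_nonneg_left (hub i k) (abs_nonneg _))
    (by
      intro i i' k
      rw [← mul_sub, ← mul_sub, abs_mul, abs_mul (2 * l * c), abs_mul (2 * l) c,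
        abs_of_nonneg hc, mul_assoc, show u i k - b k - (u i' k - b k) = u i k - u i' k by ring]
      exact mul_le_mul_of_nonneg_left (huu i i' k) (abs_nonneg _)) s
  have e2 : ∑ e, Real.exp (radSum e (fun k => 2 * l * c * t (s' e) k)) ≤
      2 ^ N * (A * Real.exp (4 * c ^ 2 * κ * l ^ 2 * N)) := by
    have := h (2 * l * c) s'
    refine le_trans (le_of_eq ?_) (this.trans (le_of_eq ?_))
    · refine Finset.sum_congr rfl fun e _ => ?_
      simp only [radSum, Finset.mul_sum]
      congr 1
      exact Finset.sum_congr rfl fun k _ => by ring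
    · ring_nf
  have e3 : ∑ e : Fin N → Bool, Real.exp (2 * l * radSum e b) ≤
      2 ^ N * (A * Real.exp (4 * c ^ 2 * κ * l ^ 2 * N)) := by
    refine (sum_exp_radSum_le b c (2 * l) hb).trans ?_
    refine mul_le_mul_of_nonneg_left ?_ (by positivity)
    have : Real.exp (c ^ 2 / 2 * (2 * l) ^ 2 * N) ≤ Real.exp (4 * c ^ 2 * κ * l ^ 2 * N) := by
      refine Real.exp_le_exp.2 ?_
      have : 0 ≤ c ^ 2 * l ^ 2 * N := by positivity
      nlinarith
    have h0 := Real.exp_pos (4 * c ^ 2 * κ * l ^ 2 * N)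
    nlinarith
  calc _ ≤ _ := Finset.sum_le_sum fun e _ => e1 e
    _ = (∑ e, Real.exp (radSum e (fun k => 2 * l * (u (s e) k - b k))) +
        ∑ e : Fin N → Bool, Real.exp (2 * l * radSum e b)) / 2 := by
      rw [← Finset.sum_div, Finset.sum_add_distrib]
    _ ≤ _ := by linarith [hs'.trans e2]

/-! ### Function classes -/

def clampR (x : ℝ) : ℝ := max (-1) (min 1 x)

lemma abs_clampR (x : ℝ) : |clampR x| ≤ 1 := by
  rw [abs_le, clampR]
  exact ⟨le_max_left _ _, max_le (by norm_num) (min_le_left _ _)⟩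

lemma clampR_mem (x : ℝ) : clampR x ∈ Set.Icc (-1 : ℝ) 1 := abs_le.1 (abs_clampR x)

lemma clampR_eq {x : ℝ} (h : |x| ≤ 1) : clampR x = x := by
  have := abs_le.1 h
  rw [clampR, min_eq_right this.2, max_eq_right this.1]

lemma continuous_clampR : Continuous clampR := by
  unfold clampR; fun_prop

lemma abs_clampR_sub (x y : ℝ) : |clampR x - clampR y| ≤ |x - y| := by
  unfold clampR
  refine (abs_max_sub_max_le_max _ _ _ _).trans ?_
  refine max_le (by simp) ((abs_min_sub_min_le_max _ _ _ _).trans (max_le (by simp) le_rfl))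

def RadF {d : ℕ} (F : Set ((Fin d → ℝ) → ℝ)) (A κ : ℝ) : Prop :=
  ∀ (N : ℕ) (Y : Fin N → Fin d → ℝ), RadV (fun (f : F) k => f.1 (Y k)) A κ

def absC {d : ℕ} (F : Set ((Fin d → ℝ) → ℝ)) : Set ((Fin d → ℝ) → ℝ) :=
  {g | ∃ (n : ℕ) (w : Fin n → ℝ) (h : Fin n → (Fin d → ℝ) → ℝ),
    ∑ i, |w i| ≤ 1 ∧ (∀ i, h i ∈ F) ∧ g = fun x => ∑ i, w i * h i x}

def HC (s : ℝ → ℝ) (d : ℕ) : ℕ → Set ((Fin d → ℝ) → ℝ)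
  | 0 => Set.range fun (k : Fin d) x => clampR (x k)
  | l + 1 => {f | ∃ g ∈ absC (HC s d l), f = fun x => s (g x)}

def Aff (d : ℕ) : Set ((Fin d → ℝ) → ℝ) :=
  {f | ∃ (c0 : ℝ) (c : Fin d → ℝ), |c0| + ∑ i, |c i| ≤ 2 ∧
    f = fun x => c0 + ∑ i, c i * clampR (x i)}

lemma abs_sum_mul_le {n : ℕ} (w z : Fin n → ℝ) (B : ℝ) (hB : 0 ≤ B) (hw : ∑ i, |w i| ≤ 1)
    (hz : ∀ i, |z i| ≤ B) : |∑ i, w i * z i| ≤ B := by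
  calc |∑ i, w i * z i| ≤ ∑ i, |w i| * B := by
        refine (Finset.abs_sum_le_sum_abs _ _).trans (Finset.sum_le_sum fun i _ => ?_)
        rw [abs_mul]; exact mul_le_mul_of_nonneg_left (hz i) (abs_nonneg _)
    _ = (∑ i, |w i|) * B := by rw [Finset.sum_mul]
    _ ≤ B := by nlinarith

lemma RadF.mono {d : ℕ} {F G : Set ((Fin d → ℝ) → ℝ)} {A κ : ℝ} (h : RadF G A κ)
    (hFG : F ⊆ G) : RadF F A κ := by
  intro N Y l s
  exact h N Y l (fun e => ⟨(s e).1, hFG (s e).2⟩)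

lemma RadF.absC {d : ℕ} {F : Set ((Fin d → ℝ) → ℝ)} {A κ : ℝ} (h : RadF F A κ)
    (hA : 1 ≤ A) (hκ : 0 ≤ κ) : RadF (absC F) (2 * A) κ := by
  intro N Y l s
  have hexp : 1 ≤ Real.exp (κ * l ^ 2 * N) := Real.one_le_exp (by positivity)
  by_cases hF : Nonempty F
  · obtain ⟨f0⟩ := hF
    have key : ∀ e : Fin N → Bool, ∃ f : F, l * radSum e (fun k => (s e).1 (Y k)) ≤
        |l * radSum e (fun k => f.1 (Y k))| := by
      intro e
      obtain ⟨n, w, hh, hw, hF, hg⟩ := (s e).2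
      have e1 : l * radSum e (fun k => (s e).1 (Y k)) =
          ∑ i, w i * (l * radSum e (fun k => hh i (Y k))) := by
        rw [hg]
        simp only [radSum, Finset.mul_sum]
        rw [Finset.sum_comm]
        refine Finset.sum_congr rfl fun i _ => Finset.sum_congr rfl fun k _ => by ring
      rcases Nat.eq_zero_or_pos n with rfl | hn
      · refine ⟨f0, ?_⟩
        rw [e1, Fin.sum_univ_zero]; exact abs_nonneg _
      · have : Nonempty (Fin n) := ⟨⟨0, hn⟩⟩
        obtain ⟨i, hi⟩ := Finite.exists_max (fun i => |l * radSum e (fun k => hh i (Y k))|)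
        refine ⟨⟨hh i, hF i⟩, ?_⟩
        rw [e1]
        exact (le_abs_self _).trans (abs_sum_mul_le _ _ _ (abs_nonneg _) hw hi)
    choose f hf using key
    have h1 := h N Y l f
    have h2 := h N Y (-l) f
    rw [neg_sq] at h2
    calc _ ≤ ∑ e, (Real.exp (l * radSum e (fun k => (f e).1 (Y k))) +
          Real.exp (-l * radSum e (fun k => (f e).1 (Y k)))) := by
          refine Finset.sum_le_sum fun e _ => ?_
          refine (Real.exp_le_exp.2 (hf e)).trans ?_
          rw [neg_mul]
          rcases abs_cases (l * radSum e (fun k => (f e).1 (Y k))) with ⟨h, _⟩ | ⟨h, _⟩ <;>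
            rw [h]
          · linarith [Real.exp_pos (-(l * radSum e (fun k => (f e).1 (Y k))))]
          · linarith [Real.exp_pos (l * radSum e (fun k => (f e).1 (Y k)))]
      _ ≤ _ := by rw [Finset.sum_add_distrib]; linarith
  · have key : ∀ e : Fin N → Bool, Real.exp (l * radSum e (fun k => (s e).1 (Y k))) = 1 := by
      intro e
      obtain ⟨n, w, hh, hw, hF', hg⟩ := (s e).2
      rcases Nat.eq_zero_or_pos n with rfl | hn
      · rw [hg]; simp [radSum]
      · exact absurd ⟨⟨hh ⟨0, hn⟩, hF' _⟩⟩ hF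
    simp only [key]
    simp only [Finset.sum_const, Finset.card_univ, Fintype.card_pi, Fintype.card_bool,
      Finset.prod_const, Fintype.card_fin, nsmul_eq_mul, mul_one]
    push_cast
    nlinarith [pow_pos (two_pos : (0 : ℝ) < 2) N, mul_le_mul hA hexp (by norm_num) (by linarith)]

lemma RadF_range {d n : ℕ} (h : Fin n → (Fin d → ℝ) → ℝ) (c : ℝ) (hc : ∀ i x, |h i x| ≤ c) :
    RadF (Set.range h) n (c ^ 2 / 2) := by
  intro N Y l s
  calc _ ≤ ∑ e, ∑ i, Real.exp (l * radSum e (fun k => h i (Y k))) := by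
        refine Finset.sum_le_sum fun e _ => ?_
        obtain ⟨i, hi⟩ := (s e).2
        simp only [← hi]
        exact Finset.single_le_sum (f := fun i => Real.exp (l * radSum e (fun k => h i (Y k))))
          (fun i _ => (Real.exp_pos _).le) (Finset.mem_univ i)
    _ = ∑ i, ∑ e, Real.exp (l * radSum e (fun k => h i (Y k))) := Finset.sum_comm
    _ ≤ ∑ i : Fin n, 2 ^ N * Real.exp (c ^ 2 / 2 * l ^ 2 * N) :=
        Finset.sum_le_sum fun i _ => sum_exp_radSum_le _ c l fun k => hc i _
    _ = _ := by simp; ring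

lemma RadF_HC {s : ℝ → ℝ} (hs : ∀ x y, |s x - s y| ≤ |x - y|) (hs1 : ∀ x, |s x| ≤ 1)
    {d : ℕ} (hd : 1 ≤ d) (l : ℕ) : RadF (HC s d l) (2 ^ l * d) (4 ^ l / 2) := by
  have hd' : (1 : ℝ) ≤ d := by exact_mod_cast hd
  induction l with
  | zero =>
    have := RadF_range (fun (k : Fin d) x => clampR (x k)) 1 (fun _ _ => abs_clampR _)
    simpa [HC] using this
  | succ l ih =>
    have h2l : (1 : ℝ) ≤ 2 ^ l := one_le_pow₀ (by norm_num)
    have h4l : (1 : ℝ) ≤ 4 ^ l := one_le_pow₀ (by norm_num)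
    have h1 := ih.absC (by nlinarith) (by positivity)
    intro N Y lam sel
    have key : ∀ f : HC s d (l + 1), ∃ g : absC (HC s d l), f.1 = fun x => s (g.1 x) := by
      rintro ⟨f, g, hg, hf⟩
      exact ⟨⟨g, hg⟩, hf⟩
    choose G hG using key
    have h2 := (h1 N Y).contraction (by nlinarith) (by linarith)
      (fun g k => s (g.1 (Y k))) (fun k => s 0) 1 (fun k => hs1 _)
      (fun i k => by simpa using hs (i.1 (Y k)) 0) (fun i i' k => by simpa using hs _ _)
      lam (fun e => G (sel e))
    refine le_trans (le_of_eq ?_) (h2.trans (le_of_eq ?_))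
    · refine Finset.sum_congr rfl fun e _ => ?_
      simp only [hG]
    · rw [pow_succ, pow_succ]; ring_nf

lemma RadF_net {s : ℝ → ℝ} (hs : ∀ x y, |s x - s y| ≤ |x - y|) (hs1 : ∀ x, |s x| ≤ 1)
    {d : ℕ} (hd : 1 ≤ d) (l : ℕ) : RadF (absC (HC s d l)) (2 * (2 ^ l * d)) (4 ^ l / 2) := by
  have hd' : (1 : ℝ) ≤ d := by exact_mod_cast hd
  have h2l : (1 : ℝ) ≤ 2 ^ l := one_le_pow₀ (by norm_num)
  exact (RadF_HC hs hs1 hd l).absC (by nlinarith) (by positivity)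

lemma RadF_Aff (d : ℕ) : RadF (Aff d) (2 * (d + 1)) 2 := by
  have := RadF_range (d := d) (n := d + 1)
    (Fin.cons (fun _ => 2) (fun (k : Fin d) x => 2 * clampR (x k))) 2 (by
      intro i x
      refine Fin.cases ?_ (fun k => ?_) i
      · simp
      · have := abs_clampR (x k)
        simp only [Fin.cons_succ, abs_mul, abs_two]; linarith)
  have h2 := this.absC (by push_cast; linarith [Nat.cast_nonneg (α := ℝ) d]) (by norm_num)
  push_cast at h2
  rw [show (2 : ℝ) ^ 2 / 2 = 2 by norm_num] at h2
  refine h2.mono ?_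
  rintro f ⟨c0, c, hc, rfl⟩
  refine ⟨d + 1, Fin.cons (c0 / 2) (fun i => c i / 2), _, ?_, fun i => Set.mem_range_self i, ?_⟩
  · rw [Fin.sum_univ_succ]
    simp only [Fin.cons_zero, Fin.cons_succ, abs_div, abs_two, ← Finset.sum_div]
    linarith
  · funext x
    rw [Fin.sum_univ_succ]
    simp only [Fin.cons_zero, Fin.cons_succ]
    congr 1
    · ring
    · exact Finset.sum_congr rfl fun i _ => by ring

lemma absC_bdd {d : ℕ} {F : Set ((Fin d → ℝ) → ℝ)} {B : ℝ} (hB : 0 ≤ B)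
    (h : ∀ f ∈ F, ∀ x, |f x| ≤ B) : ∀ f ∈ absC F, ∀ x, |f x| ≤ B := by
  rintro f ⟨n, w, hh, hw, hF, rfl⟩ x
  exact abs_sum_mul_le _ _ _ hB hw fun i => h _ (hF i) x

lemma HC_bdd {s : ℝ → ℝ} (hs1 : ∀ x, |s x| ≤ 1) {d : ℕ} (l : ℕ) :
    ∀ f ∈ HC s d l, ∀ x, |f x| ≤ 1 := by
  cases l with
  | zero => rintro f ⟨k, rfl⟩ x; exact abs_clampR _
  | succ l => rintro f ⟨g, hg, rfl⟩ x; exact hs1 _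

lemma absC_cont {d : ℕ} {F : Set ((Fin d → ℝ) → ℝ)}
    (h : ∀ f ∈ F, Continuous f) : ∀ f ∈ absC F, Continuous f := by
  rintro f ⟨n, w, hh, hw, hF, rfl⟩
  exact continuous_finsetSum _ fun i _ => continuous_const.mul (h _ (hF i))

lemma HC_cont {s : ℝ → ℝ} (hs : Continuous s) {d : ℕ} (l : ℕ) :
    ∀ f ∈ HC s d l, Continuous f := by
  induction l with
  | zero => rintro f ⟨k, rfl⟩; exact continuous_clampR.comp (continuous_apply k)
  | succ l ih => rintro f ⟨g, hg, rfl⟩; exact hs.comp (absC_cont ih g hg)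

lemma absC_lip {d : ℕ} {F : Set ((Fin d → ℝ) → ℝ)}
    (h : ∀ f ∈ F, ∀ x y, |f x - f y| ≤ dist x y) : ∀ f ∈ absC F, ∀ x y, |f x - f y| ≤ dist x y := by
  rintro f ⟨n, w, hh, hw, hF, rfl⟩ x y
  have : ∑ i, w i * hh i x - ∑ i, w i * hh i y = ∑ i, w i * (hh i x - hh i y) := by
    rw [← Finset.sum_sub_distrib]; exact Finset.sum_congr rfl fun i _ => by ring
  rw [this]
  exact abs_sum_mul_le _ _ _ dist_nonneg hw fun i => h _ (hF i) x y

lemma HC_lip {s : ℝ → ℝ} (hs : ∀ x y, |s x - s y| ≤ |x - y|) {d : ℕ} (l : ℕ) :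
    ∀ f ∈ HC s d l, ∀ x y, |f x - f y| ≤ dist x y := by
  induction l with
  | zero =>
    rintro f ⟨k, rfl⟩ x y
    exact (abs_clampR_sub _ _).trans (dist_le_pi_dist x y k)
  | succ l ih => rintro f ⟨g, hg, rfl⟩ x y; exact (hs _ _).trans (absC_lip ih g hg x y)

lemma Aff_bdd {d : ℕ} : ∀ f ∈ Aff d, ∀ x, |f x| ≤ 2 := by
  rintro f ⟨c0, c, hc, rfl⟩ x
  refine (abs_add_le _ _).trans (le_trans (add_le_add_right ?_ _) hc)
  refine (Finset.abs_sum_le_sum_abs _ _).trans (Finset.sum_le_sum fun i _ => ?_)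
  rw [abs_mul]
  nlinarith [abs_clampR (x i), abs_nonneg (c i)]

lemma Aff_cont {d : ℕ} : ∀ f ∈ Aff d, Continuous f := by
  rintro f ⟨c0, c, hc, rfl⟩
  exact continuous_const.add (continuous_finsetSum _ fun i _ =>
    continuous_const.mul (continuous_clampR.comp (continuous_apply i)))

lemma Aff_absC {d : ℕ} : ∀ f ∈ absC (Aff d), f ∈ Aff d := by
  rintro f ⟨n, w, hh, hw, hF, rfl⟩
  choose c0 c hc hf using hF
  refine ⟨∑ i, w i * c0 i, fun k => ∑ i, w i * c i k, ?_, ?_⟩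
  · calc _ ≤ ∑ i, |w i| * |c0 i| + ∑ k, ∑ i, |w i| * |c i k| := by
          refine add_le_add ?_ (Finset.sum_le_sum fun k _ => ?_)
          · refine (Finset.abs_sum_le_sum_abs _ _).trans (le_of_eq ?_)
            simp only [abs_mul]
          · refine (Finset.abs_sum_le_sum_abs _ _).trans (le_of_eq ?_)
            simp only [abs_mul]
      _ = ∑ i, |w i| * (|c0 i| + ∑ k, |c i k|) := by
          rw [Finset.sum_comm, ← Finset.sum_add_distrib]
          refine Finset.sum_congr rfl fun i _ => ?_
          rw [mul_add, Finset.mul_sum]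
      _ ≤ ∑ i, |w i| * 2 := Finset.sum_le_sum fun i _ =>
          mul_le_mul_of_nonneg_left (hc i) (abs_nonneg _)
      _ ≤ 2 := by rw [← Finset.sum_mul]; linarith
  · funext x
    simp only [hf, mul_add, Finset.sum_add_distrib, Finset.mul_sum, Finset.sum_mul]
    congr 1
    rw [Finset.sum_comm]
    refine Finset.sum_congr rfl fun i _ => Finset.sum_congr rfl fun k _ => by ring

lemma Aff_affine {d : ℕ} {f : (Fin d → ℝ) → ℝ} (hf : f ∈ Aff d) {α β : ℝ} (hα : |α| ≤ 1 / 2)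
    (hβ : |β| ≤ 1) : (fun x => α * f x + β) ∈ Aff d := by
  obtain ⟨c0, c, hc, rfl⟩ := hf
  refine ⟨α * c0 + β, fun k => α * c k, ?_, ?_⟩
  · have h1 : |α * c0 + β| ≤ |α| * |c0| + |β| := by
      rw [← abs_mul]; exact abs_add_le _ _
    have h2 : ∑ k, |α * c k| = |α| * ∑ k, |c k| := by
      rw [Finset.mul_sum]; simp only [abs_mul]
    rw [h2]
    have : 0 ≤ |c0| + ∑ i, |c i| := by positivity
    nlinarith [abs_nonneg α]
  · funext x
    rw [mul_add, Finset.mul_sum]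
    simp only [mul_assoc]
    ring

lemma HC0_Aff {s : ℝ → ℝ} {d : ℕ} : ∀ f ∈ HC s d 0, f ∈ Aff d := by
  rintro f ⟨k, rfl⟩
  refine ⟨0, Pi.single k 1, ?_, ?_⟩
  · rw [Finset.sum_eq_single k] <;> simp +contextual
  · funext x
    simp [Pi.single_apply]

lemma absC_approx {d : ℕ} {F : Set ((Fin d → ℝ) → ℝ)} {r : ℝ} (hr : 0 ≤ r)
    (h : ∀ f ∈ F, ∃ q ∈ Aff d, ∀ x, |f x - q x| ≤ r) :
    ∀ f ∈ absC F, ∃ q ∈ Aff d, ∀ x, |f x - q x| ≤ r := by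
  rintro f ⟨n, w, hh, hw, hF, rfl⟩
  choose q hq hfq using fun i => h _ (hF i)
  refine ⟨fun x => ∑ i, w i * q i x, Aff_absC _ ⟨n, w, q, hw, hq, rfl⟩, fun x => ?_⟩
  have : ∑ i, w i * hh i x - ∑ i, w i * q i x = ∑ i, w i * (hh i x - q i x) := by
    rw [← Finset.sum_sub_distrib]; exact Finset.sum_congr rfl fun i _ => by ring
  rw [this]
  exact abs_sum_mul_le _ _ _ hr hw fun i => hfq i x

lemma HC_approx {s : ℝ → ℝ} {α β δ : ℝ} (hδ : 0 ≤ δ) (hα : |α| ≤ 1 / 2) (hβ : |β| ≤ 1)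
    (hs1 : ∀ x, |s x| ≤ 1)
    (hs : ∀ x, |x| ≤ 1 → |s x - (α * x + β)| ≤ δ) {d : ℕ} (l : ℕ) :
    ∀ f ∈ HC s d l, ∃ q ∈ Aff d, ∀ x, |f x - q x| ≤ δ * (2 - 2 * (1 / 2) ^ l) := by
  induction l with
  | zero => intro f hf; exact ⟨f, HC0_Aff f hf, fun x => by simp⟩
  | succ l ih =>
    rintro f ⟨g, hg, rfl⟩
    have hpow : ((1 : ℝ) / 2) ^ l ≤ 1 := pow_le_one₀ (by norm_num) (by norm_num)
    obtain ⟨q, hq, hgq⟩ := absC_approx (mul_nonneg hδ (by linarith)) ih g hg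
    refine ⟨_, Aff_affine hq hα hβ, fun x => ?_⟩
    have h1 := hs (g x) (absC_bdd zero_le_one (HC_bdd hs1 l) g hg x)
    have h2 : |α * (g x - q x)| ≤ 1 / 2 * (δ * (2 - 2 * (1 / 2) ^ l)) := by
      rw [abs_mul]; exact mul_le_mul hα (hgq x) (abs_nonneg _) (by norm_num)
    have : s (g x) - (α * q x + β) = (s (g x) - (α * g x + β)) + α * (g x - q x) := by ring
    rw [this, pow_succ]
    refine (abs_add_le _ _).trans ?_
    linarith

lemma iterLayers_mem {s : ℝ → ℝ} {d m n : ℕ} (W1 : Matrix (Fin m) (Fin d) ℝ)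
    (hW1 : ∀ j, ∑ i, |W1 j i| ≤ 1)
    (Ws : Fin n → Matrix (Fin m) (Fin m) ℝ) (hWs : ∀ p j, ∑ i, |Ws p j i| ≤ 1) (j : Fin m) :
    (fun x => iterLayers s n Ws (applyLayer s W1 (fun i => clampR (x i))) j) ∈ HC s d (n + 1) := by
  induction n generalizing j with
  | zero =>
    exact ⟨_, ⟨d, W1 j, fun k x => clampR (x k), hW1 j, fun i => ⟨i, rfl⟩, rfl⟩, rfl⟩
  | succ n ih =>
    exact ⟨_, ⟨m, Ws (Fin.last n) j, _, hWs _ j,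
      fun i => ih (fun p => Ws p.castSucc) (fun p => hWs _) i, rfl⟩, rfl⟩

lemma nnFun_mem {s : ℝ → ℝ} {d m n : ℕ} (a : Fin m → ℝ) (ha : ∑ j, |a j| ≤ 1)
    (W1 : Matrix (Fin m) (Fin d) ℝ) (hW1 : ∀ j, ∑ i, |W1 j i| ≤ 1)
    (Ws : Fin n → Matrix (Fin m) (Fin m) ℝ) (hWs : ∀ p j, ∑ i, |Ws p j i| ≤ 1) :
    (fun x => nnFun s a W1 Ws (fun i => clampR (x i))) ∈ absC (HC s d (n + 1)) :=
  ⟨m, a, _, ha, fun j => iterLayers_mem W1 hW1 Ws hWs j, rfl⟩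

lemma applyLayer_clamp {σ : ℝ → ℝ} {m n : ℕ} (W : Matrix (Fin m) (Fin n) ℝ)
    (hW : ∀ j, ∑ i, |W j i| ≤ 1) (v : Fin n → ℝ) (hv : ∀ i, |v i| ≤ 1) :
    applyLayer σ W v = applyLayer (fun x => σ (clampR x)) W v := by
  funext j
  simp only [applyLayer]
  rw [clampR_eq (abs_sum_mul_le _ _ _ zero_le_one (hW j) hv)]

lemma iterLayers_clamp {σ : ℝ → ℝ} (hσ : ∀ x, |σ (clampR x)| ≤ 1) {m n : ℕ}
    (Ws : Fin n → Matrix (Fin m) (Fin m) ℝ) (hWs : ∀ p j, ∑ i, |Ws p j i| ≤ 1)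
    (v : Fin m → ℝ) (hv : ∀ i, |v i| ≤ 1) :
    iterLayers σ n Ws v = iterLayers (fun x => σ (clampR x)) n Ws v ∧
      ∀ i, |iterLayers σ n Ws v i| ≤ 1 := by
  induction n with
  | zero => exact ⟨rfl, hv⟩
  | succ n ih =>
    obtain ⟨h1, h2⟩ := ih (fun p => Ws p.castSucc) (fun p => hWs _)
    have h3 := applyLayer_clamp (σ := σ) (Ws (Fin.last n)) (hWs _) _ h2
    refine ⟨?_, ?_⟩
    · simp only [iterLayers]
      rw [h3, h1]
    · intro i
      simp only [iterLayers]
      rw [h3]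
      exact hσ _

lemma nnFun_clamp {σ : ℝ → ℝ} (hσ : ∀ x, |σ (clampR x)| ≤ 1) {d m n : ℕ} (a : Fin m → ℝ)
    (W1 : Matrix (Fin m) (Fin d) ℝ) (hW1 : ∀ j, ∑ i, |W1 j i| ≤ 1)
    (Ws : Fin n → Matrix (Fin m) (Fin m) ℝ) (hWs : ∀ p j, ∑ i, |Ws p j i| ≤ 1)
    (x : Fin d → ℝ) (hx : ∀ i, |x i| ≤ 1) :
    nnFun σ a W1 Ws x = nnFun (fun x => σ (clampR x)) a W1 Ws (fun i => clampR (x i)) := by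
  have h0 : (fun i => clampR (x i)) = x := funext fun i => clampR_eq (hx i)
  have h1 := applyLayer_clamp (σ := σ) W1 hW1 x hx
  rw [h0, nnFun, nnFun, h1, (iterLayers_clamp hσ Ws hWs _ _).1]
  intro i
  exact hσ _

/-! ### Uniform deviation bound via symmetrization -/

lemma RadV_loss {d N : ℕ} {F : Set ((Fin d → ℝ) → ℝ)} {A κ : ℝ} (hA : 1 ≤ A) (hκ : 1 / 2 ≤ κ)
    (hR : RadF F A κ) (hb : ∀ f ∈ F, ∀ x, |f x| ≤ 2) (f1 : (Fin d → ℝ) → ℝ)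
    (h1b : ∀ x, |f1 x| ≤ 2) {ι : Type*} (u : ι → (Fin d → ℝ) → ℝ) (hu : ∀ i, u i ∈ F)
    (Y : Fin N → Fin d → ℝ) :
    RadV (fun i k => (f1 (Y k) - u i (Y k)) ^ 2) A (256 * κ) := by
  have h0 : RadV (fun i k => u i (Y k)) A κ := by
    intro l s
    exact hR N Y l (fun e => ⟨u (s e), hu _⟩)
  have := h0.contraction hA hκ (fun i k => (f1 (Y k) - u i (Y k)) ^ 2)
    (fun k => f1 (Y k) ^ 2) 8 ?_ ?_ ?_
  · convert this using 1; ring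
  · intro k
    have := h1b (Y k)
    rw [abs_of_nonneg (sq_nonneg _), ← sq_abs]
    nlinarith [abs_nonneg (f1 (Y k))]
  · intro i k
    have h1 := h1b (Y k)
    have h2 := hb _ (hu i) (Y k)
    have : (f1 (Y k) - u i (Y k)) ^ 2 - f1 (Y k) ^ 2 =
      (u i (Y k) - 2 * f1 (Y k)) * u i (Y k) := by ring
    rw [this, abs_mul]
    refine mul_le_mul_of_nonneg_right ?_ (abs_nonneg _)
    rw [abs_le] at *
    constructor <;> linarith
  · intro i i' k
    have h1 := h1b (Y k)
    have h2 := hb _ (hu i) (Y k)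
    have h3 := hb _ (hu i') (Y k)
    have : (f1 (Y k) - u i (Y k)) ^ 2 - (f1 (Y k) - u i' (Y k)) ^ 2 =
      (u i (Y k) + u i' (Y k) - 2 * f1 (Y k)) * (u i (Y k) - u i' (Y k)) := by ring
    rw [this, abs_mul]
    refine mul_le_mul_of_nonneg_right ?_ (abs_nonneg _)
    rw [abs_le] at *
    constructor <;> linarith

lemma radSum_sub {N : ℕ} (e : Fin N → Bool) (v w : Fin N → ℝ) :
    radSum e (fun k => v k - w k) = radSum e v - radSum e w := by
  simp only [radSum, ← Finset.sum_sub_distrib, mul_sub]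

lemma abs_radSum_le {N : ℕ} (e : Fin N → Bool) (v : Fin N → ℝ) (B : ℝ) (hv : ∀ k, |v k| ≤ B) :
    |radSum e v| ≤ N * B := by
  refine (Finset.abs_sum_le_sum_abs _ _).trans ?_
  calc _ ≤ ∑ k : Fin N, B := by
        refine Finset.sum_le_sum fun k _ => ?_
        rw [abs_mul]
        have : |sgn' (e k)| = 1 := by unfold sgn'; split_ifs <;> simp
        rw [this, one_mul]; exact hv k
    _ = _ := by simp

lemma sym_pointwise {N : ℕ} {ι : Type*} [Fintype ι] [Nonempty ι] (a b : ι → Fin N → ℝ)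
    {A κ : ℝ} (ha : RadV a A κ) (hb : RadV b A κ) (l : ℝ) :
    ∑ e : Fin N → Bool, Finset.univ.sup' Finset.univ_nonempty
      (fun i => Real.exp (l * radSum e (fun k => b i k - a i k))) ≤
    2 ^ N * (A * Real.exp (4 * κ * l ^ 2 * N)) := by
  have key : ∀ e : Fin N → Bool, ∃ i : ι, Finset.univ.sup' Finset.univ_nonempty
      (fun i => Real.exp (l * radSum e (fun k => b i k - a i k))) =
      Real.exp (l * radSum e (fun k => b i k - a i k)) := by
    intro e
    obtain ⟨i, _, hi⟩ := Finset.exists_mem_eq_sup' (Finset.univ_nonempty (α := ι))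
      (fun i => Real.exp (l * radSum e (fun k => b i k - a i k)))
    exact ⟨i, hi⟩
  choose s hs using key
  have h1 := hb (2 * l) s
  have h2 := ha (-(2 * l)) s
  have e1 : κ * (2 * l) ^ 2 * N = 4 * κ * l ^ 2 * N := by ring
  have e2 : κ * (-(2 * l)) ^ 2 * N = 4 * κ * l ^ 2 * N := by ring
  rw [e1] at h1
  rw [e2] at h2
  calc _ ≤ ∑ e, (Real.exp (2 * l * radSum e (b (s e))) +
        Real.exp (-(2 * l) * radSum e (a (s e)))) / 2 := by
        refine Finset.sum_le_sum fun e _ => ?_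
        rw [hs e, radSum_sub]
        set p := radSum e (b (s e))
        set q := radSum e (a (s e))
        have e1 : Real.exp (2 * l * p) = Real.exp (l * p) ^ 2 := by
          rw [← Real.exp_nat_mul]; ring_nf
        have e2 : Real.exp (-(2 * l) * q) = Real.exp (-(l * q)) ^ 2 := by
          rw [← Real.exp_nat_mul]; ring_nf
        rw [mul_sub, sub_eq_add_neg, Real.exp_add, e1, e2]
        nlinarith [sq_nonneg (Real.exp (l * p) - Real.exp (-(l * q)))]
    _ ≤ _ := by
      rw [← Finset.sum_div, Finset.sum_add_distrib]; linarith

lemma exp_integral_le {Ω : Type*} [MeasurableSpace Ω] (μ : Measure Ω) [IsProbabilityMeasure μ]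
    (Z : Ω → ℝ) (hZ : Integrable Z μ) (hE : Integrable (fun x => Real.exp (Z x)) μ) :
    Real.exp (∫ x, Z x ∂μ) ≤ ∫ x, Real.exp (Z x) ∂μ := by
  set m := ∫ x, Z x ∂μ with hm
  have h1 : ∀ x, Real.exp m * (1 + (Z x - m)) ≤ Real.exp (Z x) := by
    intro x
    have : Real.exp (Z x) = Real.exp m * Real.exp (Z x - m) := by
      rw [← Real.exp_add]; ring_nf
    rw [this]
    refine mul_le_mul_of_nonneg_left ?_ (Real.exp_pos _).le
    linarith [Real.add_one_le_exp (Z x - m)]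
  have hsub : Integrable (fun x => Z x - m) μ := hZ.sub (integrable_const m)
  have h2 : ∫ x, Real.exp m * (1 + (Z x - m)) ∂μ = Real.exp m := by
    rw [integral_const_mul, integral_add (integrable_const (1 : ℝ)) hsub,
      integral_sub hZ (integrable_const _)]
    simp [hm]
  calc Real.exp m = ∫ x, Real.exp m * (1 + (Z x - m)) ∂μ := h2.symm
    _ ≤ _ := integral_mono
      (((integrable_const (1 : ℝ)).add hsub).const_mul _) hE h1

lemma integrable_sup'_exp {Ω : Type*} [MeasurableSpace Ω] (μ : Measure Ω) [IsProbabilityMeasure μ]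
    {ι : Type*} [Fintype ι] [Nonempty ι] (Z : ι → Ω → ℝ) (B : ℝ)
    (hZ : ∀ i, Measurable (Z i)) (hB : ∀ i x, Z i x ≤ B) :
    Integrable (fun x => Finset.univ.sup' Finset.univ_nonempty
      (fun i => Real.exp (Z i x))) μ := by
  have hm : Measurable (fun x => Finset.univ.sup' Finset.univ_nonempty
      (fun i => Real.exp (Z i x))) := by
    have := Finset.measurable_sup' (Finset.univ_nonempty (α := ι))
      (f := fun i x => Real.exp (Z i x)) (fun i _ => (hZ i).exp)
    convert this using 1
    ext x; simp
  refine Integrable.of_bound hm.aestronglyMeasurable (Real.exp B) (Filter.Eventually.of_forall ?_)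
  intro x
  obtain ⟨i, _, hi⟩ := Finset.exists_mem_eq_sup' (Finset.univ_nonempty (α := ι))
      (fun i => Real.exp (Z i x))
  rw [hi, Real.norm_eq_abs, abs_of_pos (Real.exp_pos _)]
  exact Real.exp_le_exp.2 (hB i x)

lemma sym_integral {E : Type*} [MeasurableSpace E] {N : ℕ} (μ : Measure E) [IsProbabilityMeasure μ]
    {ι : Type*} [Fintype ι] [Nonempty ι] (h : ι → E → ℝ) (hm : ∀ i, Measurable (h i))
    (B : ℝ) (hB : ∀ i x, |h i x| ≤ B) {A κ : ℝ}
    (hR : ∀ Y : Fin N → E, RadV (fun i k => h i (Y k)) A κ) (l : ℝ) :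
    ∫ X, Finset.univ.sup' Finset.univ_nonempty
      (fun i => Real.exp (l * (N * ∫ x, h i x ∂μ - ∑ k, h i (X k))))
        ∂(Measure.pi fun _ : Fin N => μ) ≤
    A * Real.exp (4 * κ * l ^ 2 * N) := by
  set P := Measure.pi fun _ : Fin N => μ with hP
  set Q := Measure.pi fun _ : Fin N => μ.prod μ with hQ
  set tt : Fin N → Bool := fun _ => true
  -- symmetrized variables
  set Z : (Fin N → Bool) → ι → (Fin N → E × E) → ℝ :=
    fun e i z => l * radSum e (fun k => h i (z k).2 - h i (z k).1) with hZ
  have hZm : ∀ e i, Measurable (Z e i) := by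
    intro e i
    have := hm i
    simp only [hZ, radSum]
    fun_prop
  have hZB : ∀ e i z, |Z e i z| ≤ |l| * (N * (B + B)) := by
    intro e i z
    simp only [hZ]
    rw [abs_mul]
    refine mul_le_mul_of_nonneg_left (abs_radSum_le _ _ _ fun k => ?_) (abs_nonneg _)
    exact (abs_sub _ _).trans (add_le_add (hB _ _) (hB _ _))
  set Ψ : (Fin N → Bool) → (Fin N → E × E) → ℝ := fun e z =>
    Finset.univ.sup' Finset.univ_nonempty (fun i => Real.exp (Z e i z)) with hΨ
  have hΨint : ∀ e, Integrable (Ψ e) Q := fun e =>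
    integrable_sup'_exp Q (Z e) _ (hZm e) (fun i z => (le_abs_self _).trans (hZB e i z))
  have hswap : ∀ e, ∫ z, Ψ e z ∂Q = ∫ z, Ψ tt z ∂Q := by
    intro e
    have hmp : MeasurePreserving (fun (z : Fin N → E × E) k =>
        (if e k then (fun p : E × E => p) else Prod.swap) (z k)) Q Q := by
      refine measurePreserving_pi _ _ fun k => ?_
      by_cases hk : e k = true
      · simp only [hk, if_true]
        exact MeasurePreserving.id _
      · simp only [hk]
        exact Measure.measurePreserving_swap
    have hh := integral_map (μ := Q) hmp.measurable.aemeasurable (f := Ψ tt)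
      (by rw [hmp.map_eq]; exact (hΨint tt).aestronglyMeasurable)
    rw [hmp.map_eq] at hh
    rw [hh]
    refine integral_congr_ae (Filter.Eventually.of_forall fun z => ?_)
    have : ∀ i, Z e i z = Z tt i (fun k =>
        (if e k then (fun p : E × E => p) else Prod.swap) (z k)) := by
      intro i
      simp only [hZ, radSum, tt]
      congr 1
      refine Finset.sum_congr rfl fun k _ => ?_
      cases hk : e k <;> simp [sgn']
    simp only [hΨ, this]
  have hsum : (2 : ℝ) ^ N * ∫ z, Ψ tt z ∂Q ≤ 2 ^ N * (A * Real.exp (4 * κ * l ^ 2 * N)) := by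
    have e1 : (2 : ℝ) ^ N * ∫ z, Ψ tt z ∂Q = ∑ e : Fin N → Bool, ∫ z, Ψ e z ∂Q := by
      simp [hswap]
    rw [e1, ← integral_finsetSum _ fun e _ => hΨint e]
    calc _ ≤ ∫ z : Fin N → E × E, (2 : ℝ) ^ N * (A * Real.exp (4 * κ * l ^ 2 * N)) ∂Q := by
          refine integral_mono (integrable_finsetSum _ fun e _ => hΨint e)
            (integrable_const _) fun z => ?_
          exact sym_pointwise (fun i k => h i (z k).1) (fun i k => h i (z k).2)
            (hR fun k => (z k).1) (hR fun k => (z k).2) l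
      _ = _ := by simp
  have hsum' : ∫ z, Ψ tt z ∂Q ≤ A * Real.exp (4 * κ * l ^ 2 * N) :=
    le_of_mul_le_mul_left hsum (by positivity)
  refine le_trans ?_ hsum'
  -- ghost sample
  set Φ : (Fin N → E) × (Fin N → E) → ℝ := fun p => Finset.univ.sup' Finset.univ_nonempty
    (fun i => Real.exp (l * (∑ k, h i (p.2 k) - ∑ k, h i (p.1 k)))) with hΦ
  have hSm : ∀ i, Measurable fun X : Fin N → E => ∑ k, h i (X k) := by
    intro i; have := hm i; fun_prop
  have hSB : ∀ i (X : Fin N → E), |∑ k, h i (X k)| ≤ N * B := by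
    intro i X
    refine (Finset.abs_sum_le_sum_abs _ _).trans ?_
    exact (Finset.sum_le_sum fun k _ => hB i (X k)).trans (by simp)
  have hΦB : ∀ i (p : (Fin N → E) × (Fin N → E)),
      l * (∑ k, h i (p.2 k) - ∑ k, h i (p.1 k)) ≤ |l| * (N * B + N * B) := by
    intro i p
    refine (le_abs_self _).trans ?_
    rw [abs_mul]
    exact mul_le_mul_of_nonneg_left ((abs_sub _ _).trans (add_le_add (hSB _ _) (hSB _ _)))
      (abs_nonneg _)
  have hΦm : ∀ i, Measurable fun p : (Fin N → E) × (Fin N → E) =>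
      l * (∑ k, h i (p.2 k) - ∑ k, h i (p.1 k)) := fun i =>
    (((hSm i).comp measurable_snd).sub ((hSm i).comp measurable_fst)).const_mul l
  have hΦint : Integrable Φ (P.prod P) := integrable_sup'_exp _ _ _ hΦm hΦB
  have hΦQ : ∫ z, Ψ tt z ∂Q = ∫ p, Φ p ∂(P.prod P) := by
    have hmp := measurePreserving_arrowProdEquivProdArrow E E (Fin N) (fun _ => μ) (fun _ => μ)
    rw [← hmp.integral_comp']
    refine integral_congr_ae (Filter.Eventually.of_forall fun z => ?_)
    simp only [hΨ, hΦ, hZ, radSum, sgn', tt, if_true, one_mul, Finset.sum_sub_distrib]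
    rfl
  rw [hΦQ, integral_prod _ hΦint]
  have hΦint1 : ∀ X, Integrable (fun X' => Φ (X, X')) P := fun X =>
    integrable_sup'_exp P _ _ (fun i => (hΦm i).comp measurable_prodMk_left) (fun i X' => hΦB i _)
  have hmean : ∀ i, ∫ X, ∑ k, h i (X k) ∂P = N * ∫ x, h i x ∂μ := by
    intro i
    have hi : ∀ k, Integrable (fun X : Fin N → E => h i (X k)) P := fun k =>
      Integrable.of_bound ((hm i).comp (measurable_pi_apply k)).aestronglyMeasurable B
        (Filter.Eventually.of_forall fun X => hB _ _)
    rw [integral_finsetSum _ fun k _ => hi k]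
    have : ∀ k : Fin N, ∫ X, h i (X k) ∂P = ∫ x, h i x ∂μ := by
      intro k
      have hmp := measurePreserving_eval (fun _ : Fin N => μ) k
      have := integral_map (μ := P) hmp.measurable.aemeasurable
        (f := h i) (hm i).aestronglyMeasurable
      rw [hmp.map_eq] at this
      exact this.symm
    simp [this]
  refine integral_mono ?_ hΦint.integral_prod_left fun X => ?_
  · refine integrable_sup'_exp P _ (|l| * (|N * B| + N * B)) (fun i => ?_) fun i X => ?_
    · exact ((measurable_const).sub (hSm i)).const_mul l
    · refine (le_abs_self _).trans ?_
      rw [abs_mul]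
      refine mul_le_mul_of_nonneg_left ((abs_sub _ _).trans (add_le_add ?_ (hSB _ _)))
        (abs_nonneg _)
      rw [← hmean]
      refine le_trans ?_ (le_abs_self _)
      have := norm_integral_le_of_norm_le_const (μ := P) (f := fun X => ∑ k, h i (X k))
        (C := N * B) (Filter.Eventually.of_forall fun X => hSB i X)
      simpa using this
  · refine Finset.sup'_le _ _ fun i _ => ?_
    have hint : Integrable (fun X' : Fin N → E => l * (∑ k, h i (X' k) - ∑ k, h i (X k))) P := by
      refine Integrable.of_bound ((hΦm i).comp measurable_prodMk_left).aestronglyMeasurable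
        (|l| * (N * B + N * B)) (Filter.Eventually.of_forall fun X' => ?_)
      show |l * (∑ k, h i (X' k) - ∑ k, h i (X k))| ≤ _
      rw [abs_mul]
      exact mul_le_mul_of_nonneg_left ((abs_sub _ _).trans (add_le_add (hSB _ _) (hSB _ _)))
        (abs_nonneg _)
    have hint2 : Integrable (fun X' : Fin N → E =>
        Real.exp (l * (∑ k, h i (X' k) - ∑ k, h i (X k)))) P := by
      refine Integrable.of_bound ((hΦm i).comp measurable_prodMk_left).exp.aestronglyMeasurable
        (Real.exp (|l| * (N * B + N * B))) (Filter.Eventually.of_forall fun X' => ?_)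
      rw [Real.norm_eq_abs, abs_of_pos (Real.exp_pos _)]
      exact Real.exp_le_exp.2 (hΦB i (X, X'))
    have h1 := exp_integral_le P _ hint hint2
    have hSint : Integrable (fun X : Fin N → E => ∑ k, h i (X k)) P :=
      Integrable.of_bound (hSm i).aestronglyMeasurable (N * B)
        (Filter.Eventually.of_forall fun X => hSB i X)
    rw [integral_const_mul, integral_sub hSint (integrable_const _), hmean] at h1
    simp only [integral_const, probReal_univ, smul_eq_mul, one_mul] at h1
    refine h1.trans (integral_mono hint2 (hΦint1 X) fun X' => ?_)
    exact Finset.le_sup' (fun i => Real.exp (l * (∑ k, h i (X' k) - ∑ k, h i (X k))))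
      (Finset.mem_univ i)

lemma unif_fin {d N : ℕ} (μ : Measure (Fin d → ℝ)) [IsProbabilityMeasure μ]
    {F : Set ((Fin d → ℝ) → ℝ)} {A κ : ℝ} (hA : 1 ≤ A) (hκ : 1 / 2 ≤ κ)
    (hR : RadF F A κ) (hb : ∀ f ∈ F, ∀ x, |f x| ≤ 2) (hc : ∀ f ∈ F, Continuous f)
    (f1 : (Fin d → ℝ) → ℝ) (h1b : ∀ x, |f1 x| ≤ 2) (h1c : Continuous f1) {t : ℝ} (ht : 0 < t)
    {ι : Type*} [Fintype ι] [Nonempty ι] (u : ι → (Fin d → ℝ) → ℝ) (hu : ∀ i, u i ∈ F) :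
    (Measure.pi fun _ : Fin N => μ) {X | ∃ i, N * t + ∑ k, (f1 (X k) - u i (X k)) ^ 2 <
      N * ∫ x, (f1 x - u i x) ^ 2 ∂μ} ≤ ENNReal.ofReal (A * Real.exp (-(N * t ^ 2 / (4096 * κ)))) := by
  set l : ℝ := t / (2048 * κ) with hl
  have hκ0 : 0 < κ := by linarith
  have hl0 : 0 < l := by positivity
  set h : ι → (Fin d → ℝ) → ℝ := fun i x => (f1 x - u i x) ^ 2 with hh
  have hm : ∀ i, Measurable (h i) := fun i =>
    ((h1c.sub (hc _ (hu i))).pow 2).measurable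
  have hB : ∀ i x, |h i x| ≤ 16 := by
    intro i x
    have h1 := h1b x
    have h2 := hb _ (hu i) x
    simp only [hh]
    rw [abs_of_nonneg (sq_nonneg _)]
    rw [abs_le] at h1 h2
    nlinarith
  have hint := sym_integral (N := N) μ h hm 16 hB
    (fun Y => RadV_loss hA hκ hR hb f1 h1b u hu Y) l
  set G : (Fin N → Fin d → ℝ) → ℝ := fun X => Finset.univ.sup' Finset.univ_nonempty
      (fun i => Real.exp (l * (N * ∫ x, h i x ∂μ - ∑ k, h i (X k)))) with hG
  have hSm : ∀ i, Measurable fun X : Fin N → (Fin d → ℝ) => ∑ k, h i (X k) := by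
    intro i; have := hm i; fun_prop
  have hGint : Integrable G (Measure.pi fun _ : Fin N => μ) := by
    refine integrable_sup'_exp _ _ (l * (N * 16)) (fun i => ?_) fun i X => ?_
    · exact ((measurable_const).sub (hSm i)).const_mul l
    · refine mul_le_mul_of_nonneg_left ?_ hl0.le
      have h1 : 0 ≤ ∑ k, h i (X k) := Finset.sum_nonneg fun k _ => sq_nonneg _
      have h2 : ∫ x, h i x ∂μ ≤ 16 := by
        have := norm_integral_le_of_norm_le_const (μ := μ) (f := h i)
          (C := 16) (Filter.Eventually.of_forall fun X => hB i X)
        refine (le_abs_self _).trans ?_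
        simpa using this
      have := mul_le_mul_of_nonneg_left h2 (Nat.cast_nonneg (α := ℝ) N)
      linarith
  have hG0 : ∀ i X, Real.exp (l * (N * ∫ x, h i x ∂μ - ∑ k, h i (X k))) ≤ G X := fun i X =>
    Finset.le_sup' (fun i => Real.exp (l * (N * ∫ x, h i x ∂μ - ∑ k, h i (X k))))
      (Finset.mem_univ i)
  have hmk := mul_meas_ge_le_integral_of_nonneg (μ := Measure.pi fun _ : Fin N => μ) (f := G)
    (Filter.Eventually.of_forall fun X => (Real.exp_pos _).le.trans (hG0 (Classical.arbitrary ι) X)) hGint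
    (Real.exp (l * (N * t)))
  have hreal : (Measure.pi fun _ : Fin N => μ).real {X | Real.exp (l * (N * t)) ≤ G X} ≤
      A * Real.exp (-(N * t ^ 2 / (4096 * κ))) := by
    have h1 := hmk.trans hint
    have e1 : A * Real.exp (4 * (256 * κ) * l ^ 2 * N) =
        Real.exp (l * (N * t)) * (A * Real.exp (-(N * t ^ 2 / (4096 * κ)))) := by
      rw [mul_left_comm (Real.exp _), ← Real.exp_add]
      congr 2
      rw [hl]
      field_simp
      ring
    rw [e1] at h1
    exact le_of_mul_le_mul_left h1 (Real.exp_pos _)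
  calc _ ≤ (Measure.pi fun _ : Fin N => μ) {X | Real.exp (l * (N * t)) ≤ G X} := by
        refine measure_mono ?_
        rintro X ⟨i, hi⟩
        refine le_trans (Real.exp_le_exp.2 ?_) (hG0 i X)
        refine mul_le_mul_of_nonneg_left ?_ hl0.le
        simp only [hh]
        linarith
    _ ≤ _ := by
      rw [← ENNReal.ofReal_toReal (measure_ne_top _ _)]
      exact ENNReal.ofReal_le_ofReal hreal

lemma unif_dev {d N : ℕ} (μ : Measure (Fin d → ℝ)) [IsProbabilityMeasure μ]
    {F : Set ((Fin d → ℝ) → ℝ)} {A κ : ℝ} (hA : 1 ≤ A) (hκ : 1 / 2 ≤ κ)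
    (hR : RadF F A κ) (hb : ∀ f ∈ F, ∀ x, |f x| ≤ 2) (hc : ∀ f ∈ F, Continuous f)
    (f1 : (Fin d → ℝ) → ℝ) (h1b : ∀ x, |f1 x| ≤ 2) (h1c : Continuous f1) {t : ℝ} (ht : 0 < t) :
    (Measure.pi fun _ : Fin N => μ) {X | ∃ f ∈ F, N * t + ∑ k, (f1 (X k) - f (X k)) ^ 2 <
      N * ∫ x, (f1 x - f x) ^ 2 ∂μ} ≤ ENNReal.ofReal (A * Real.exp (-(N * t ^ 2 / (4096 * κ)))) := by
  let C := {g : C(Fin d → ℝ, ℝ) // (g : (Fin d → ℝ) → ℝ) ∈ F}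
  by_cases hne : F.Nonempty
  swap
  · rw [Set.not_nonempty_iff_eq_empty] at hne
    simp [hne]
  obtain ⟨f0, hf0⟩ := hne
  have : Nonempty C := ⟨⟨⟨f0, hc _ hf0⟩, hf0⟩⟩
  have : TopologicalSpace.SeparableSpace C := by
    have : SecondCountableTopology C := TopologicalSpace.Subtype.secondCountableTopology _
    infer_instance
  let D : ℕ → C := TopologicalSpace.denseSeq C
  have hD : DenseRange D := TopologicalSpace.denseRange_denseSeq C
  let B : ℕ → Set (Fin N → Fin d → ℝ) := fun n => {X | ∃ i : Fin (n + 1),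
    N * t + ∑ k, (f1 (X k) - (D i).1 (X k)) ^ 2 < N * ∫ x, (f1 x - (D i).1 x) ^ 2 ∂μ}
  have hBm : Monotone B := by
    intro n m hnm X ⟨i, hi⟩
    exact ⟨⟨i, by omega⟩, hi⟩
  have hsub : {X : Fin N → Fin d → ℝ | ∃ f ∈ F, N * t + ∑ k, (f1 (X k) - f (X k)) ^ 2 <
      N * ∫ x, (f1 x - f x) ^ 2 ∂μ} ⊆ ⋃ n, B n := by
    rintro X ⟨f, hf, hX⟩
    let g : C := ⟨⟨f, hc _ hf⟩, hf⟩
    obtain ⟨s, hs, hlim⟩ := mem_closure_iff_seq_limit.1 (hD g)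
    choose j hj using hs
    have hpt : ∀ x, Filter.Tendsto (fun n => (s n).1 x) Filter.atTop (nhds (f x)) := by
      intro x
      have h1 : Continuous fun g : C => g.1 x :=
        (continuous_eval_const x).comp continuous_subtype_val
      exact (h1.tendsto g).comp hlim
    have hI : Filter.Tendsto (fun n => ∫ x, (f1 x - (s n).1 x) ^ 2 ∂μ) Filter.atTop
        (nhds (∫ x, (f1 x - f x) ^ 2 ∂μ)) := by
      refine tendsto_integral_of_dominated_convergence (fun _ => 16) (fun n => ?_)
        (integrable_const _) (fun n => Filter.Eventually.of_forall fun x => ?_)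
        (Filter.Eventually.of_forall fun x => ?_)
      · exact ((h1c.sub (s n).1.continuous).pow 2).measurable.aestronglyMeasurable
      · have h1 := h1b x
        have h2 := hb _ (s n).2 x
        rw [Real.norm_eq_abs, abs_of_nonneg (sq_nonneg _)]
        rw [abs_le] at h1 h2
        nlinarith
      · exact ((hpt x).const_sub _).pow 2
    have hL : Filter.Tendsto (fun n => N * t + ∑ k, (f1 (X k) - (s n).1 (X k)) ^ 2) Filter.atTop
        (nhds (N * t + ∑ k, (f1 (X k) - f (X k)) ^ 2)) :=
      (tendsto_finsetSum _ fun k _ => ((hpt (X k)).const_sub _).pow 2).const_add _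
    obtain ⟨n, hn⟩ := (hL.eventually_lt (hI.const_mul (N : ℝ)) hX).exists
    rw [Set.mem_iUnion]
    refine ⟨j n, ⟨j n, by omega⟩, ?_⟩
    simp only [hj n]
    exact hn
  calc _ ≤ (Measure.pi fun _ : Fin N => μ) (⋃ n, B n) := measure_mono hsub
    _ = ⨆ n, (Measure.pi fun _ : Fin N => μ) (B n) := hBm.measure_iUnion
    _ ≤ _ := iSup_le fun n =>
      unif_fin μ hA hκ hR hb hc f1 h1b h1c ht (fun i : Fin (n + 1) => ((D i).1 : (Fin d → ℝ) → ℝ))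
        fun i => (D i).2

def BadS {d : ℕ} (μ : Measure (Fin d → ℝ)) (F : Set ((Fin d → ℝ) → ℝ)) (f1 : (Fin d → ℝ) → ℝ)
    (N : ℕ) (ε : ℝ) : Set (Fin N → Fin d → ℝ) :=
  {X | (∀ i j, |X i j| ≤ 1) ∧ ∃ f ∈ F, (∀ i, f (X i) = f1 (X i)) ∧
    ε < ∫ x, (f1 x - f x) ^ 2 ∂μ}

lemma arith_y {N ε D : ℝ} (hε : 0 < ε) (hε4 : ε < 4) (hD : 1 ≤ D)
    (hN : 2 ^ 24 * ε ^ (-(6 : ℤ)) * D ^ 96 ≤ N) :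
    ∃ y : ℝ, 2 ≤ y ∧ N = y ^ 12 ∧ N ^ ((1 : ℝ) / 4) = y ^ 3 ∧ 16 * D ^ 16 ≤ ε * y ^ 2 := by
  have hN0 : 0 ≤ N := le_trans (by positivity) hN
  refine ⟨N ^ ((1 : ℝ) / 12), ?_, ?_, ?_, ?_⟩
  rotate_left
  · rw [← Real.rpow_natCast, ← Real.rpow_mul hN0]; norm_num
  · rw [← Real.rpow_natCast, ← Real.rpow_mul hN0]; norm_num
  · refine (pow_le_pow_iff_left₀ (by positivity) (by positivity) (n := 6) (by norm_num)).1 ?_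
    have : (N ^ ((1 : ℝ) / 12)) ^ 12 = N := by
      rw [← Real.rpow_natCast, ← Real.rpow_mul hN0]; norm_num
    rw [mul_pow ε, ← pow_mul, this]
    have h6 : 0 < ε ^ 6 := by positivity
    calc (16 * D ^ 16) ^ 6 = ε ^ 6 * (2 ^ 24 * ε ^ (-(6 : ℤ)) * D ^ 96) := by
          rw [_root_.zpow_neg, show (6 : ℤ) = ((6 : ℕ) : ℤ) by rfl, zpow_natCast]
          field_simp
          ring
      _ ≤ _ := mul_le_mul_of_nonneg_left hN h6.le
  · have h1 : 16 * D ^ 16 ≤ ε * (N ^ ((1 : ℝ) / 12)) ^ 2 := by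
      refine (pow_le_pow_iff_left₀ (by positivity) (by positivity) (n := 6) (by norm_num)).1 ?_
      have : (N ^ ((1 : ℝ) / 12)) ^ 12 = N := by
        rw [← Real.rpow_natCast, ← Real.rpow_mul hN0]; norm_num
      rw [mul_pow ε, ← pow_mul, this]
      have h6 : 0 < ε ^ 6 := by positivity
      calc (16 * D ^ 16) ^ 6 = ε ^ 6 * (2 ^ 24 * ε ^ (-(6 : ℤ)) * D ^ 96) := by
            rw [_root_.zpow_neg, show (6 : ℤ) = ((6 : ℕ) : ℤ) by rfl, zpow_natCast]
            field_simp
            ring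
        _ ≤ _ := mul_le_mul_of_nonneg_left hN h6.le
    have h2 : 1 ≤ D ^ 16 := one_le_pow₀ hD
    have h0 : 0 ≤ N ^ ((1 : ℝ) / 12) := by positivity
    set y := N ^ ((1 : ℝ) / 12)
    by_contra hlt
    push Not at hlt
    have : y ^ 2 < 4 := by nlinarith
    nlinarith [sq_nonneg y]

lemma exp_fin {A u E z : ℝ} (hA : A ≤ Real.exp u) (hE : u + z ≤ E) :
    A * Real.exp (-E) ≤ Real.exp (-z) := by
  calc A * Real.exp (-E) ≤ Real.exp u * Real.exp (-E) :=
        mul_le_mul_of_nonneg_right hA (Real.exp_pos _).le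
    _ = Real.exp (u - E) := by rw [← Real.exp_add]; rfl
    _ ≤ _ := Real.exp_le_exp.2 (by linarith)

lemma y_sq_aux {ε y D : ℝ} (hy : 2 ≤ y) (hD : 0 ≤ D) (h : 16 * D ^ 16 ≤ ε * y ^ 2) :
    256 * D ^ 32 * y ^ 8 ≤ y ^ 12 * ε ^ 2 := by
  have h1 : (16 * D ^ 16) ^ 2 ≤ (ε * y ^ 2) ^ 2 := pow_le_pow_left₀ (by positivity) h 2
  calc 256 * D ^ 32 * y ^ 8 = (16 * D ^ 16) ^ 2 * y ^ 8 := by ring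
    _ ≤ (ε * y ^ 2) ^ 2 * y ^ 8 := mul_le_mul_of_nonneg_right h1 (by positivity)
    _ = _ := by ring

lemma case_net {s : ℝ → ℝ} (hs : ∀ x y, |s x - s y| ≤ |x - y|) (hs1 : ∀ x, |s x| ≤ 1)
    {d L N M : ℕ} (hd : 2 ≤ d) (hL : 1 ≤ L) (hM : L ≤ M) (μ : Measure (Fin d → ℝ))
    [IsProbabilityMeasure μ] {f1 : (Fin d → ℝ) → ℝ} (hf1 : f1 ∈ absC (HC s d L)) {ε y : ℝ}
    (hε : 0 < ε) (hy : 2 ≤ y) (hN : (N : ℝ) = y ^ 12) (hyε : 16 * ((d : ℝ) ^ M) ^ 16 ≤ ε * y ^ 2) :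
    (Measure.pi fun _ : Fin N => μ) (BadS μ (absC (HC s d L)) f1 N ε) ≤
      ENNReal.ofReal (Real.exp (-y ^ 3)) := by
  have hsc : Continuous s := by
    have : LipschitzWith 1 s := LipschitzWith.of_dist_le_mul fun x y => by
      simpa [Real.dist_eq] using hs x y
    exact this.continuous
  have hb : ∀ f ∈ absC (HC s d L), ∀ x, |f x| ≤ 2 := fun f hf x =>
    (absC_bdd zero_le_one (HC_bdd hs1 L) f hf x).trans one_le_two
  have hc : ∀ f ∈ absC (HC s d L), Continuous f := absC_cont (HC_cont hsc L)
  have hd' : (2 : ℝ) ≤ d := by exact_mod_cast hd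
  set B : ℝ := (d : ℝ) ^ L with hB
  have h2L : (2 : ℝ) ^ L ≤ B := pow_le_pow_left₀ (by norm_num) hd' L
  have h2L1 : (1 : ℝ) ≤ 2 ^ L := one_le_pow₀ (by norm_num)
  have hdB : (d : ℝ) ≤ B := le_self_pow₀ (by linarith) (by omega)
  have hB2 : 2 ≤ B := hd'.trans hdB
  have h4L : (4 : ℝ) ^ L ≤ B ^ 2 := by
    have : (4 : ℝ) ^ L = (2 ^ L) ^ 2 := by rw [← pow_mul, mul_comm, pow_mul]; norm_num
    rw [this]; exact pow_le_pow_left₀ (by positivity) h2L 2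
  have h4L1 : (1 : ℝ) ≤ 4 ^ L := one_le_pow₀ (by norm_num)
  have h := unif_dev (N := N) μ (A := 2 * (2 ^ L * d)) (κ := 4 ^ L / 2) (by nlinarith) (by linarith)
    (RadF_net hs hs1 (by omega) L) hb hc f1 (hb _ hf1) (hc _ hf1) hε
  have hN0 : (0 : ℝ) < N := by rw [hN]; positivity
  refine (measure_mono ?_).trans (h.trans (ENNReal.ofReal_le_ofReal ?_))
  · rintro X ⟨_, f, hf, hfX, hX⟩
    refine ⟨f, hf, ?_⟩
    simp only [hfX, sub_self]
    simpa using mul_lt_mul_of_pos_left hX hN0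
  · have hBM : B ≤ (d : ℝ) ^ M := pow_le_pow_right₀ (by linarith) hM
    have h1 := y_sq_aux hy (by positivity) hyε
    have hB32 : B ^ 32 ≤ ((d : ℝ) ^ M) ^ 32 := pow_le_pow_left₀ (by linarith) hBM 32
    have h3 : 256 * B ^ 32 * y ^ 8 ≤ N * ε ^ 2 := by
      rw [hN]; refine le_trans ?_ h1
      have : 0 ≤ y ^ 8 := by positivity
      nlinarith
    refine exp_fin (u := 3 * B) ?_ ?_
    · have hBe : B ≤ Real.exp B := by linarith [Real.add_one_le_exp B]
      calc 2 * (2 ^ L * (d : ℝ)) ≤ B * (B * B) := by gcongr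
        _ ≤ Real.exp B * (Real.exp B * Real.exp B) := by gcongr
        _ = _ := by rw [← Real.exp_add, ← Real.exp_add]; ring_nf
    · have h4 : B ^ 30 * y ^ 8 / 8 ≤ N * ε ^ 2 / (4096 * (4 ^ L / 2)) := by
        rw [div_le_div_iff₀ (by norm_num) (by positivity)]
        have : B ^ 30 * y ^ 8 * (4096 * (4 ^ L / 2)) ≤ B ^ 30 * y ^ 8 * (4096 * (B ^ 2 / 2)) := by
          gcongr
        nlinarith
      refine le_trans ?_ h4
      have h5 : (2 : ℝ) ^ 29 ≤ B ^ 29 := pow_le_pow_left₀ (by norm_num) hB2 29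
      have h6 : (2 : ℝ) ^ 5 ≤ y ^ 5 := pow_le_pow_left₀ (by norm_num) hy 5
      have h7 : (2 : ℝ) ^ 3 ≤ y ^ 3 := pow_le_pow_left₀ (by norm_num) hy 3
      have h8 : B ^ 30 * y ^ 8 ≥ 2 ^ 29 * B * (2 ^ 5 * y ^ 3) := by
        calc B ^ 30 * y ^ 8 = (B ^ 29 * B) * (y ^ 5 * y ^ 3) := by ring
          _ ≥ _ := by gcongr
      nlinarith [mul_nonneg (by linarith : 0 ≤ B - 2) (by linarith : 0 ≤ y ^ 3 - 2 ^ 3)]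

lemma case_aff {s : ℝ → ℝ} (hs : ∀ x y, |s x - s y| ≤ |x - y|) (hs1 : ∀ x, |s x| ≤ 1)
    {d L N : ℕ} (hd : 2 ≤ d) (hL : 2 ≤ L) (μ : Measure (Fin d → ℝ))
    [IsProbabilityMeasure μ] {f1 : (Fin d → ℝ) → ℝ} (hf1 : f1 ∈ absC (HC s d L)) {ε y : ℝ}
    (hε : 0 < ε) (hy : 2 ≤ y) (hN : (N : ℝ) = y ^ 12) (hyε : 16 * (d : ℝ) ^ 16 ≤ ε * y ^ 2)
    {α β δ : ℝ} (hδ : δ = Real.sqrt ε / (4 * L)) (hα : |α| ≤ 1 / 2) (hβ : |β| ≤ 1)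
    (hsp : ∀ x, |x| ≤ 1 → |s x - (α * x + β)| ≤ δ) :
    (Measure.pi fun _ : Fin N => μ) (BadS μ (absC (HC s d L)) f1 N ε) ≤
      ENNReal.ofReal (Real.exp (-y ^ 3)) := by
  have hL' : (2 : ℝ) ≤ L := by exact_mod_cast hL
  have hδ0 : 0 ≤ δ := by rw [hδ]; positivity
  set r := 3 * Real.sqrt ε / 16 with hr
  have hr0 : 0 ≤ r := by positivity
  have hr2 : r ^ 2 = 9 * ε / 256 := by rw [hr, div_pow, mul_pow, Real.sq_sqrt hε.le]; norm_num
  have happ : ∀ f ∈ absC (HC s d L), ∃ q ∈ Aff d, ∀ x, |f x - q x| ≤ r := by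
    refine absC_approx hr0 fun f hf => ?_
    obtain ⟨q, hq, hfq⟩ := HC_approx hδ0 hα hβ hs1 hsp L f hf
    refine ⟨q, hq, fun x => (hfq x).trans ?_⟩
    have h1 : (2 - 2 * (1 / 2 : ℝ) ^ L) ≤ 3 * L / 4 := by
      rcases Nat.eq_or_lt_of_le hL with h | h
      · rw [← h]; norm_num
      · have : (3 : ℝ) ≤ L := by exact_mod_cast h
        have : (0 : ℝ) ≤ (1 / 2 : ℝ) ^ L := by positivity
        linarith
    refine (mul_le_mul_of_nonneg_left h1 hδ0).trans (le_of_eq ?_)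
    rw [hδ, hr]
    field_simp
    ring
  have hsc : Continuous s := by
    have : LipschitzWith 1 s := LipschitzWith.of_dist_le_mul fun x y => by
      simpa [Real.dist_eq] using hs x y
    exact this.continuous
  have hb : ∀ f ∈ absC (HC s d L), ∀ x, |f x| ≤ 2 := fun f hf x =>
    (absC_bdd zero_le_one (HC_bdd hs1 L) f hf x).trans one_le_two
  have hc : ∀ f ∈ absC (HC s d L), Continuous f := absC_cont (HC_cont hsc L)
  have hd' : (2 : ℝ) ≤ d := by exact_mod_cast hd
  obtain ⟨q1, hq1, hfq1⟩ := happ f1 hf1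
  have h := unif_dev (N := N) μ (A := 2 * (d + 1)) (κ := 2) (t := ε / 8) (by linarith) (by norm_num)
    (RadF_Aff d) Aff_bdd Aff_cont q1 (Aff_bdd _ hq1) (Aff_cont _ hq1) (by positivity)
  have hN0 : (0 : ℝ) < N := by rw [hN]; positivity
  refine (measure_mono ?_).trans (h.trans (ENNReal.ofReal_le_ofReal ?_))
  · rintro X ⟨_, f, hf, hfX, hX⟩
    obtain ⟨q2, hq2, hfq2⟩ := happ f hf
    refine ⟨q2, hq2, ?_⟩
    have hsum : ∑ k, (q1 (X k) - q2 (X k)) ^ 2 ≤ N * (9 * ε / 64) := by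
      have : ∀ k, (q1 (X k) - q2 (X k)) ^ 2 ≤ 9 * ε / 64 := by
        intro k
        have e1 := hfq1 (X k)
        have e2 := hfq2 (X k)
        rw [hfX k] at e2
        have : |q1 (X k) - q2 (X k)| ≤ 2 * r := by
          rw [abs_le] at *; constructor <;> linarith
        rw [← sq_abs]
        have := pow_le_pow_left₀ (abs_nonneg _) this 2
        nlinarith
      calc _ ≤ ∑ k : Fin N, 9 * ε / 64 := Finset.sum_le_sum fun k _ => this k
        _ = _ := by simp
    have hmul : 52 / 64 * ε < 2 * ∫ x, (q1 x - q2 x) ^ 2 ∂μ + 2 * (9 * ε / 64) - ε * 12 / 64 := by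
      have hqi : Integrable (fun x => (q1 x - q2 x) ^ 2) μ := by
        refine Integrable.of_bound (C := 16)
          (((Aff_cont _ hq1).sub (Aff_cont _ hq2)).pow 2).measurable.aestronglyMeasurable
          (Filter.Eventually.of_forall fun x => ?_)
        have h1 := Aff_bdd _ hq1 x
        have h2 := Aff_bdd _ hq2 x
        rw [Real.norm_eq_abs, abs_of_nonneg (sq_nonneg _)]
        rw [abs_le] at h1 h2
        nlinarith
      have hfi : Integrable (fun x => (f1 x - f x) ^ 2) μ := by
        refine Integrable.of_bound (C := 16)
          (((hc _ hf1).sub (hc _ hf)).pow 2).measurable.aestronglyMeasurable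
          (Filter.Eventually.of_forall fun x => ?_)
        have h1 := hb _ hf1 x
        have h2 := hb _ hf x
        rw [Real.norm_eq_abs, abs_of_nonneg (sq_nonneg _)]
        rw [abs_le] at h1 h2
        nlinarith
      have : ∫ x, (f1 x - f x) ^ 2 ∂μ ≤ ∫ x, (2 * (q1 x - q2 x) ^ 2 + 2 * (9 * ε / 64)) ∂μ := by
        refine integral_mono hfi ((hqi.const_mul 2).add (integrable_const _)) fun x => ?_
        have e1 := hfq1 x
        have e2 := hfq2 x
        have e3 : |(f1 x - f x) - (q1 x - q2 x)| ≤ 2 * r := by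
          rw [abs_le] at *; constructor <;> linarith
        have e4 := pow_le_pow_left₀ (abs_nonneg _) e3 2
        rw [sq_abs] at e4
        show (f1 x - f x) ^ 2 ≤ 2 * (q1 x - q2 x) ^ 2 + 2 * (9 * ε / 64)
        nlinarith [sq_nonneg ((f1 x - f x) - 2 * (q1 x - q2 x))]
      rw [integral_add (hqi.const_mul 2) (integrable_const _), integral_const_mul] at this
      simp at this
      linarith
    have : 17 * ε / 64 < ∫ x, (q1 x - q2 x) ^ 2 ∂μ := by linarith
    have := mul_lt_mul_of_pos_left this hN0
    nlinarith
  · have h1 := y_sq_aux hy (by positivity) hyε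
    rw [← hN] at h1
    refine exp_fin (u := 2 * d + 1) ?_ ?_
    · linarith [Real.add_one_le_exp (2 * (d : ℝ) + 1)]
    · have h4 : (d : ℝ) ^ 32 * y ^ 8 / 2 ^ 11 ≤ N * (ε / 8) ^ 2 / (4096 * 2) := by
        rw [div_le_div_iff₀ (by norm_num) (by positivity)]
        nlinarith
      refine le_trans ?_ h4
      have h5 : (2 : ℝ) ^ 31 ≤ (d : ℝ) ^ 31 := pow_le_pow_left₀ (by norm_num) hd' 31
      have h6 : (2 : ℝ) ^ 5 ≤ y ^ 5 := pow_le_pow_left₀ (by norm_num) hy 5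
      have h7 : (2 : ℝ) ^ 3 ≤ y ^ 3 := pow_le_pow_left₀ (by norm_num) hy 3
      have h8 : (d : ℝ) ^ 32 * y ^ 8 ≥ 2 ^ 31 * d * (2 ^ 5 * y ^ 3) := by
        calc (d : ℝ) ^ 32 * y ^ 8 = ((d : ℝ) ^ 31 * d) * (y ^ 5 * y ^ 3) := by ring
          _ ≥ _ := by gcongr
      nlinarith [mul_nonneg (by linarith : 0 ≤ (d : ℝ) - 2) (by linarith : 0 ≤ y ^ 3 - 2 ^ 3)]

lemma cells_fail {E : Type*} [MeasurableSpace E] (μ : Measure E) [IsProbabilityMeasure μ]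
    {N n : ℕ} (q : E → ℕ) (hq : Measurable q) (τ : ℝ) :
    (Measure.pi fun _ : Fin N => μ) {X | ∃ j < n, τ ≤ μ.real (q ⁻¹' {j}) ∧ ∀ k, q (X k) ≠ j} ≤
      ENNReal.ofReal (n * Real.exp (-(N * τ))) := by
  let T : ℕ → Set (Fin N → E) := fun j =>
    if τ ≤ μ.real (q ⁻¹' {j}) then Set.univ.pi (fun _ => (q ⁻¹' {j})ᶜ) else ∅
  have hT : ∀ j, (Measure.pi fun _ : Fin N => μ) (T j) ≤ ENNReal.ofReal (Real.exp (-(N * τ))) := by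
    intro j
    by_cases hj : τ ≤ μ.real (q ⁻¹' {j})
    · simp only [T, if_pos hj]
      rw [Measure.pi_pi]
      have hms : MeasurableSet (q ⁻¹' {j}) := hq (measurableSet_singleton j)
      have h1 : μ ((q ⁻¹' {j})ᶜ) ≤ ENNReal.ofReal (Real.exp (-τ)) := by
        rw [← ENNReal.ofReal_toReal (measure_ne_top μ _)]
        refine ENNReal.ofReal_le_ofReal ?_
        have := probReal_compl_eq_one_sub (μ := μ) hms
        rw [Measure.real] at this
        rw [this]
        linarith [Real.add_one_le_exp (-τ)]
      calc _ ≤ ∏ _i : Fin N, ENNReal.ofReal (Real.exp (-τ)) := Finset.prod_le_prod' fun i _ => h1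
        _ = _ := by
          rw [Finset.prod_const, ← ENNReal.ofReal_pow (Real.exp_pos _).le, ← Real.exp_nat_mul]
          simp
    · simp only [T, if_neg hj, measure_empty, zero_le]
  calc _ ≤ (Measure.pi fun _ : Fin N => μ) (⋃ j ∈ Finset.range n, T j) := by
        refine measure_mono ?_
        rintro X ⟨j, hj, hj1, hj2⟩
        simp only [Set.mem_iUnion]
        refine ⟨j, Finset.mem_range.2 hj, ?_⟩
        simp only [T, if_pos hj1]
        intro k _
        exact hj2 k
    _ ≤ ∑ j ∈ Finset.range n, (Measure.pi fun _ : Fin N => μ) (T j) := measure_biUnion_finset_le _ _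
    _ ≤ ∑ j ∈ Finset.range n, ENNReal.ofReal (Real.exp (-(N * τ))) :=
        Finset.sum_le_sum fun j _ => hT j
    _ = _ := by
      rw [Finset.sum_const, Finset.card_range, nsmul_eq_mul, ENNReal.ofReal_mul (by positivity),
        ENNReal.ofReal_natCast]

lemma cells_good {E : Type*} [MeasurableSpace E] (μ : Measure E) [IsProbabilityMeasure μ]
    {n : ℕ} (q : E → ℕ) (hq : Measurable q) (τ η : ℝ) (hτ : 0 < τ) (g : E → ℝ)
    (hgm : Measurable g) (hg2 : ∀ x, |g x| ≤ 2)
    (hg : ∀ᵐ x ∂μ, q x < n ∧ (τ ≤ μ.real (q ⁻¹' {q x}) → |g x| ≤ η)) :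
    ∫ x, g x ^ 2 ∂μ ≤ η ^ 2 + 4 * (n * τ) := by
  let J := (Finset.range n).filter fun j => μ.real (q ⁻¹' {j}) < τ
  let S : Set E := ⋃ j ∈ J, q ⁻¹' {j}
  have hS : MeasurableSet S :=
    Finset.measurableSet_biUnion _ fun j _ => hq (measurableSet_singleton j)
  have hSr : μ.real S ≤ n * τ := by
    calc μ.real S ≤ ∑ j ∈ J, μ.real (q ⁻¹' {j}) := measureReal_biUnion_finset_le _ _
      _ ≤ ∑ j ∈ J, τ := Finset.sum_le_sum fun j hj => (Finset.mem_filter.1 hj).2.le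
      _ ≤ _ := by
        rw [Finset.sum_const, nsmul_eq_mul]
        refine mul_le_mul_of_nonneg_right ?_ (by linarith)
        exact_mod_cast (Finset.card_filter_le _ _).trans (by simp)
  have hgi : Integrable (fun x => g x ^ 2) μ := by
    refine Integrable.of_bound (C := 4) (hgm.pow_const 2).aestronglyMeasurable
      (Filter.Eventually.of_forall fun x => ?_)
    rw [Real.norm_eq_abs, abs_of_nonneg (sq_nonneg _), ← sq_abs]
    nlinarith [hg2 x, abs_nonneg (g x)]
  have hind : Integrable (S.indicator fun _ => (4 : ℝ)) μ := (integrable_const _).indicator hS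
  have : ∫ x, g x ^ 2 ∂μ ≤ ∫ x, (η ^ 2 + S.indicator (fun _ => (4 : ℝ)) x) ∂μ := by
    refine integral_mono_ae hgi ((integrable_const _).add hind) ?_
    filter_upwards [hg] with x hx
    show g x ^ 2 ≤ η ^ 2 + S.indicator (fun _ => (4 : ℝ)) x
    by_cases hh : τ ≤ μ.real (q ⁻¹' {q x})
    · have h1 := pow_le_pow_left₀ (abs_nonneg _) (hx.2 hh) 2
      rw [sq_abs] at h1
      have : 0 ≤ S.indicator (fun _ => (4 : ℝ)) x := Set.indicator_nonneg (fun _ _ => by norm_num) x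
      linarith
    · have hxS : x ∈ S := by
        simp only [S, Set.mem_iUnion]
        exact ⟨q x, Finset.mem_filter.2 ⟨Finset.mem_range.2 hx.1, not_le.1 hh⟩, rfl⟩
      rw [Set.indicator_of_mem hxS, ← sq_abs]
      nlinarith [hg2 x, abs_nonneg (g x), sq_nonneg η]
  rw [integral_add (integrable_const _) hind, integral_indicator_const _ hS] at this
  simp at this
  linarith

lemma case_one {s : ℝ → ℝ} (hs : ∀ x y, |s x - s y| ≤ |x - y|) (hs1 : ∀ x, |s x| ≤ 1)
    {L N : ℕ} (μ : Measure (Fin 1 → ℝ)) (hμ : ∀ᵐ x ∂μ, ∀ j, |x j| ≤ 1)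
    [IsProbabilityMeasure μ] {f1 : (Fin 1 → ℝ) → ℝ} (hf1 : f1 ∈ absC (HC s 1 L)) {ε y : ℝ}
    (hε : 0 < ε) (hy : 2 ≤ y) (hN : (N : ℝ) = y ^ 12) (hyε : 16 ≤ ε * y ^ 2) :
    (Measure.pi fun _ : Fin N => μ) (BadS μ (absC (HC s 1 L)) f1 N ε) ≤
      ENNReal.ofReal (Real.exp (-y ^ 3)) := by
  have hsc : Continuous s := by
    have : LipschitzWith 1 s := LipschitzWith.of_dist_le_mul fun x y => by
      simpa [Real.dist_eq] using hs x y
    exact this.continuous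
  have hb : ∀ f ∈ absC (HC s 1 L), ∀ x, |f x| ≤ 1 := absC_bdd zero_le_one (HC_bdd hs1 L)
  have hc : ∀ f ∈ absC (HC s 1 L), Continuous f := absC_cont (HC_cont hsc L)
  have hlip := absC_lip (HC_lip hs (d := 1) L)
  set K : ℕ := ⌈3 * y / 2⌉₊ with hK
  have hK1 : 3 * y / 2 ≤ K := Nat.le_ceil _
  have hK2 : (K : ℝ) < 3 * y / 2 + 1 := Nat.ceil_lt_add_one (by linarith)
  have hK0 : (0 : ℝ) < K := by linarith
  set n := K + 1 with hn
  have hn' : (n : ℝ) = K + 1 := by rw [hn]; push_cast; ring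
  have hn3 : (n : ℝ) ≤ 3 * y := by linarith
  have hn0 : (0 : ℝ) < n := by linarith
  set τ := ε / (8 * n) with hτ
  have hτ0 : 0 < τ := by positivity
  let q : (Fin 1 → ℝ) → ℕ := fun x => ⌊(x 0 + 1) * K / 2⌋₊
  have hq : Measurable q := by
    have h0 : Measurable fun x : Fin 1 → ℝ => (x 0 + 1) * (K : ℝ) / 2 := by fun_prop
    exact Nat.measurable_floor.comp h0
  have hqlt : ∀ x : Fin 1 → ℝ, (∀ j, |x j| ≤ 1) → q x < n := by
    intro x hx
    have h0 := abs_le.1 (hx 0)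
    refine (Nat.floor_lt (by nlinarith)).2 ?_
    rw [hn']
    nlinarith
  have hqd : ∀ x y : Fin 1 → ℝ, (∀ j, |x j| ≤ 1) → (∀ j, |y j| ≤ 1) → q x = q y →
      dist x y ≤ 2 / K := by
    intro x y hx hy hxy
    rw [dist_pi_le_iff (by positivity)]
    intro j
    rw [Subsingleton.elim j 0, Real.dist_eq]
    have h0 := abs_le.1 (hx 0)
    have h1 := abs_le.1 (hy 0)
    have a1 := Nat.floor_le (show 0 ≤ (x 0 + 1) * K / 2 by nlinarith)
    have a2 := Nat.lt_floor_add_one ((x 0 + 1) * K / 2)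
    have b1 := Nat.floor_le (show 0 ≤ (y 0 + 1) * K / 2 by nlinarith)
    have b2 := Nat.lt_floor_add_one ((y 0 + 1) * K / 2)
    have hxy' : ((⌊(x 0 + 1) * K / 2⌋₊ : ℕ) : ℝ) = (⌊(y 0 + 1) * K / 2⌋₊ : ℕ) := by
      exact_mod_cast hxy
    rw [le_div_iff₀ hK0, ← abs_of_pos hK0, ← abs_mul, abs_le]
    constructor <;> nlinarith
  have hfail := cells_fail (N := N) (n := n) μ q hq τ
  refine (measure_mono ?_).trans (hfail.trans (ENNReal.ofReal_le_ofReal ?_))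
  · rintro X ⟨hXc, f, hf, hfX, hX⟩
    by_contra hcon
    simp only [Set.mem_ofPred_eq, not_exists, not_and, not_forall, not_not] at hcon
    refine absurd hX (not_lt.2 ?_)
    have hfin := cells_good μ (n := n) q hq τ (4 / K) hτ0 (fun x => f1 x - f x)
      ((hc _ hf1).sub (hc _ hf)).measurable (fun x => ?_) ?_
    · refine hfin.trans ?_
      have e1 : 4 * (n * τ) = ε / 2 := by rw [hτ]; field_simp; norm_num
      have e2 : (4 / (K : ℝ)) ^ 2 ≤ ε / 2 := by
        rw [div_pow, div_le_iff₀ (by positivity)]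
        have : (3 * y / 2) ^ 2 ≤ (K : ℝ) ^ 2 := pow_le_pow_left₀ (by linarith) hK1 2
        nlinarith
      linarith
    · have h1 := hb _ hf1 x
      have h2 := hb _ hf x
      rw [abs_le] at *
      constructor <;> linarith
    · filter_upwards [hμ] with x hx
      refine ⟨hqlt x hx, fun hh => ?_⟩
      obtain ⟨k, hk⟩ := hcon _ (hqlt x hx) hh
      have d1 := hqd x (X k) hx (hXc k) hk.symm
      have l1 := hlip _ hf1 x (X k)
      have l2 := hlip _ hf x (X k)
      have e := hfX k
      have e4 : 4 / (K : ℝ) = 2 / K + 2 / K := by ring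
      rw [e4]
      rw [e] at l2
      rw [abs_le] at *
      constructor <;> linarith
  · refine exp_fin (u := 3 * y) ?_ ?_
    · linarith [Real.add_one_le_exp (3 * y)]
    · have h1 : y ^ 9 * (2 / 3) ≤ N * τ := by
        rw [hτ, hN, ← mul_div_assoc (y ^ 12), le_div_iff₀ (by positivity)]
        calc y ^ 9 * (2 / 3) * (8 * n) ≤ y ^ 9 * (2 / 3) * (8 * (3 * y)) := by gcongr
          _ = y ^ 10 * 16 := by ring
          _ ≤ y ^ 10 * (ε * y ^ 2) := by gcongr
          _ = _ := by ring
      refine le_trans ?_ h1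
      have h6 : (2 : ℝ) ^ 6 ≤ y ^ 6 := pow_le_pow_left₀ (by norm_num) hy 6
      have h2 : (2 : ℝ) ^ 2 ≤ y ^ 2 := pow_le_pow_left₀ (by norm_num) hy 2
      have h9 : y ^ 9 ≥ 2 ^ 6 * y ^ 3 := by
        calc y ^ 9 = y ^ 6 * y ^ 3 := by ring
          _ ≥ _ := by gcongr
      have h3 : y ^ 3 ≥ 2 ^ 2 * y := by
        calc y ^ 3 = y ^ 2 * y := by ring
          _ ≥ _ := by gcongr
      linarith

lemma ae_pi_cube {P : Measure ℝ} (hP : AdmissibleDist P) (d : ℕ) :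
    ∀ᵐ x ∂(piP P d), ∀ j, |x j| ≤ 1 := by
  have hPp : IsProbabilityMeasure P := hP.1
  rw [ae_all_iff]
  intro j
  exact (Measure.tendsto_eval_ae_ae (μ := fun _ : Fin d => P) (i := j)).eventually (admissible_ae hP)

lemma ae_samples_cube {P : Measure ℝ} (hP : AdmissibleDist P) (d N : ℕ) :
    ∀ᵐ X ∂(samples P d N), ∀ i j, |X i j| ≤ 1 := by
  have hPp : IsProbabilityMeasure P := hP.1
  have hμp : IsProbabilityMeasure (piP P d) := by unfold piP; infer_instance
  rw [ae_all_iff]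
  intro i
  exact (Measure.tendsto_eval_ae_ae (μ := fun _ : Fin N => piP P d) (i := i)).eventually
    (ae_pi_cube hP d)

lemma int_le_of_sq {d : ℕ} (μ : Measure (Fin d → ℝ)) [IsProbabilityMeasure μ] {g : (Fin d → ℝ) → ℝ}
    {ε : ℝ} (h : ∀ x, g x ^ 2 ≤ ε) : ∫ x, g x ^ 2 ∂μ ≤ ε := by
  have := norm_integral_le_of_norm_le_const (μ := μ) (f := fun x => g x ^ 2)
    (C := ε) (Filter.Eventually.of_forall fun x => by
      rw [Real.norm_eq_abs, abs_of_nonneg (sq_nonneg _)]; exact h x)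
  refine (le_abs_self _).trans ?_
  simpa using this

lemma bad_empty {d N : ℕ} (μ : Measure (Fin d → ℝ)) [IsProbabilityMeasure μ]
    {F : Set ((Fin d → ℝ) → ℝ)} {f1 : (Fin d → ℝ) → ℝ} {ε : ℝ}
    (h : ∀ f ∈ F, ∀ X : Fin N → Fin d → ℝ, (∀ i, f (X i) = f1 (X i)) →
      ∀ x, (f1 x - f x) ^ 2 ≤ ε) :
    BadS μ F f1 N ε = ∅ := by
  rw [Set.eq_empty_iff_forall_notMem]
  rintro X ⟨_, f, hf, hfX, hX⟩
  exact absurd hX (not_lt.2 (int_le_of_sq μ (h f hf X hfX)))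

lemma const_approx {s : ℝ → ℝ} {b δ : ℝ} (hδ : 0 ≤ δ) (hsp : ∀ x, |x| ≤ 1 → |s x - b| ≤ δ)
    (hs1 : ∀ x, |s x| ≤ 1) {d l : ℕ} : ∀ f ∈ absC (HC s d (l + 1)), ∀ x y, |f x - f y| ≤ 2 * δ := by
  rintro f ⟨n, w, hh, hw, hF, rfl⟩ x y
  have : ∑ i, w i * hh i x - ∑ i, w i * hh i y = ∑ i, w i * (hh i x - hh i y) := by
    rw [← Finset.sum_sub_distrib]; exact Finset.sum_congr rfl fun i _ => by ring
  show |∑ i, w i * hh i x - ∑ i, w i * hh i y| ≤ 2 * δ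
  rw [this]
  refine abs_sum_mul_le _ _ _ (by linarith) hw fun i => ?_
  obtain ⟨g, hg, hgi⟩ := hF i
  have h1 := hsp _ (absC_bdd zero_le_one (HC_bdd hs1 l) g hg x)
  have h2 := hsp _ (absC_bdd zero_le_one (HC_bdd hs1 l) g hg y)
  simp only [hgi]
  rw [abs_le] at *
  constructor <;> linarith

lemma bad_bound {P : Measure ℝ} (hP : AdmissibleDist P) {σ : ℝ → ℝ} (hσ : AdmissibleActivation σ)
    {d L N : ℕ} (hL : 1 ≤ L) {ε : ℝ} (hε : 0 < ε) {f1 : (Fin d → ℝ) → ℝ}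
    (hf1 : f1 ∈ absC (HC (fun x => σ (clampR x)) d L)) {M : ℕ}
    (hM : M = approxOrder σ (Real.sqrt (ε / (16 * (L : ℝ) ^ 2))) ^ L)
    (hN : (N : ℝ) ≥ 2 ^ 24 * ε ^ (-(6 : ℤ)) * Real.exp (96 * Real.log d * M) * CPk P M ^ 18) :
    samples P d N (BadS (piP P d) (absC (HC (fun x => σ (clampR x)) d L)) f1 N ε) ≤
      ENNReal.ofReal (Real.exp (-(N : ℝ) ^ ((1 : ℝ) / 4))) := by
  have hPp : IsProbabilityMeasure P := hP.1
  have hμp : IsProbabilityMeasure (piP P d) := by unfold piP; infer_instance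
  set s : ℝ → ℝ := fun x => σ (clampR x) with hsdef
  obtain ⟨_, hpoly, hlip, hbd⟩ := hσ
  have hs1 : ∀ x, |s x| ≤ 1 := fun x => hbd _ (clampR_mem x)
  have hs : ∀ x y, |s x - s y| ≤ |x - y| := by
    intro x y
    have := hlip.dist_le_mul _ (clampR_mem x) _ (clampR_mem y)
    simp only [Real.dist_eq, NNReal.coe_one, one_mul] at this
    exact this.trans (abs_clampR_sub x y)
  have hb : ∀ f ∈ absC (HC s d L), ∀ x, |f x| ≤ 1 := absC_bdd zero_le_one (HC_bdd hs1 L)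
  have hC : (1 : ℝ) ≤ CPk P M ^ 18 := one_le_pow₀ (one_le_CPk hP M)
  have hN1 : 2 ^ 24 * ε ^ (-(6 : ℤ)) * Real.exp (96 * Real.log d * M) ≤ N := by
    refine le_trans ?_ hN
    exact le_mul_of_one_le_right (by positivity) hC
  have hNpos : 0 < N := by
    have : (0 : ℝ) < N := lt_of_lt_of_le (by positivity) hN1
    exact_mod_cast this
  -- large ε
  by_cases hε4 : 4 ≤ ε
  · rw [bad_empty]
    · simp
    · intro f hf X _ x
      have h1 := hb _ hf1 x
      have h2 := hb _ hf x
      rw [abs_le] at h1 h2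
      nlinarith
  push Not at hε4
  -- zero-dimensional input
  by_cases hd0 : d = 0
  · subst hd0
    rw [bad_empty]
    · simp
    · intro f hf X hX x
      have : x = X ⟨0, hNpos⟩ := Subsingleton.elim _ _
      rw [this, hX]
      simp [hε.le]
  have hd1 : 1 ≤ d := Nat.one_le_iff_ne_zero.2 hd0
  have hd1' : (1 : ℝ) ≤ d := by exact_mod_cast hd1
  have hL' : (1 : ℝ) ≤ L := by exact_mod_cast hL
  set δ := Real.sqrt (ε / (16 * (L : ℝ) ^ 2)) with hδdef
  have hδ : δ = Real.sqrt ε / (4 * L) := by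
    rw [hδdef, Real.sqrt_div hε.le, show 16 * (L : ℝ) ^ 2 = (4 * L) ^ 2 by ring,
      Real.sqrt_sq (by positivity)]
  have hsq : 0 < Real.sqrt ε := Real.sqrt_pos.2 hε
  have hδ0 : 0 < δ := by rw [hδ]; positivity
  obtain ⟨p, hpdeg, hpσ, hp01⟩ := hpoly δ hδ0
  have hps : ∀ x, |x| ≤ 1 → |s x - p.eval x| ≤ δ := by
    intro x hx
    have := hpσ x (abs_le.1 hx)
    simp only [hsdef]
    rwa [clampR_eq hx, abs_sub_comm]
  -- constant approximant
  by_cases hφ0 : approxOrder σ δ = 0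
  · rw [bad_empty]
    · simp
    · intro f hf X hX x
      obtain ⟨l, rfl⟩ : ∃ l, L = l + 1 := ⟨L - 1, by omega⟩
      rw [hφ0] at hpdeg
      have hpC := Polynomial.eq_C_of_natDegree_eq_zero hpdeg
      have hps' : ∀ x, |x| ≤ 1 → |s x - p.coeff 0| ≤ δ := by
        intro x hx
        have := hps x hx
        rw [hpC] at this
        simpa using this
      have h1 := const_approx hδ0.le hps' hs1 f hf x (X ⟨0, hNpos⟩)
      have h2 := const_approx hδ0.le hps' hs1 f1 hf1 x (X ⟨0, hNpos⟩)
      rw [hX] at h1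
      have h4 : 4 * δ ≤ Real.sqrt ε := by
        rw [hδ, ← mul_div_assoc, div_le_iff₀ (by positivity)]
        nlinarith
      have h3 : |f1 x - f x| ≤ Real.sqrt ε := by
        rw [abs_le] at *
        constructor <;> linarith
      rw [← sq_abs]
      have := pow_le_pow_left₀ (abs_nonneg _) h3 2
      rwa [Real.sq_sqrt hε.le] at this
  have hD : (1 : ℝ) ≤ (d : ℝ) ^ M := one_le_pow₀ hd1'
  have hexp : Real.exp (96 * Real.log d * M) = ((d : ℝ) ^ M) ^ 96 := by
    have : 96 * Real.log d * M = ((M * 96 : ℕ) : ℝ) * Real.log d := by push_cast; ring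
    rw [this, Real.exp_nat_mul, Real.exp_log (by linarith), pow_mul]
  rw [hexp] at hN1
  obtain ⟨y, hy, hNy, hN4, hyε⟩ := arith_y hε hε4 hD hN1
  rw [hN4]
  -- one-dimensional input
  by_cases hd : d = 1
  · subst hd
    refine case_one hs hs1 (piP P 1) ?_ hf1 hε hy hNy (by simpa using hyε)
    exact ae_pi_cube hP 1
  have hd2 : 2 ≤ d := by omega
  by_cases hLM : L ≤ M
  · exact case_net hs hs1 hd2 hL hLM (piP P d) hf1 hε hy hNy hyε
  have hφ1 : approxOrder σ δ = 1 := by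
    by_contra h1
    have h2 : 2 ≤ approxOrder σ δ := by omega
    apply hLM
    rw [hM]
    exact (Nat.lt_two_pow_self).le.trans (Nat.pow_le_pow_left h2 L)
  have hM1 : M = 1 := by rw [hM, hφ1, one_pow]
  have hL2 : 2 ≤ L := by omega
  rw [hφ1] at hpdeg
  have hpe : ∀ x, p.eval x = p.coeff 1 * x + p.coeff 0 := by
    intro x
    rw [Polynomial.eval_eq_sum_range, hpdeg]
    simp [Finset.sum_range_succ]
    ring
  have e1 := hp01 1 (by simp)
  have e2 := hp01 (-1) (by simp)
  have e3 := hp01 0 (by simp)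
  rw [hpe] at e1 e2 e3
  obtain ⟨a1, a2⟩ := e1
  obtain ⟨b1, b2⟩ := e2
  obtain ⟨c1, c2⟩ := e3
  refine case_aff hs hs1 hd2 hL2 (piP P d) hf1 hε hy hNy (by simpa [hM1] using hyε) hδ
    (α := p.coeff 1) (β := p.coeff 0) ?_ ?_ ?_
  · rw [abs_le]; constructor <;> linarith
  · rw [abs_le]; constructor <;> linarith
  · intro x hx
    rw [← hpe]; exact hps x hx
/-- Admissible activation, teacher/student with unit `ℓ1`-bounded weights:
any interpolating student of width `m̂ ≥ m*` generalizes to within `ε` of the teacher,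
with probability at least `1 − exp(−c N^{1/4})`, provided
`N ≥ 2^{24} ε^{−6} exp(96 log(d) M) C(P,M)^{18}` with `M = φ_σ(√(ε/16L²))^L`. -/
theorem overparametrized_generalization :
    ∃ c > (0 : ℝ), ∀ (P : Measure ℝ), AdmissibleDist P →
      ∀ (σ : ℝ → ℝ), AdmissibleActivation σ →
      ∀ (d m L N : ℕ), 1 ≤ L →
      ∀ (ε : ℝ), 0 < ε →
      ∀ (a : Fin m → ℝ) (W1 : Matrix (Fin m) (Fin d) ℝ)
        (Ws : Fin (L - 1) → Matrix (Fin m) (Fin m) ℝ),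
      (∑ j, |a j| ≤ 1) →
      (∀ j, ∑ i, |W1 j i| ≤ 1) →
      (∀ p j, ∑ i, |Ws p j i| ≤ 1) →
      ∀ M : ℕ, M = approxOrder σ (Real.sqrt (ε / (16 * (L : ℝ) ^ 2))) ^ L →
      (N : ℝ) ≥ 2 ^ 24 * ε ^ (-(6 : ℤ)) * Real.exp (96 * Real.log d * M) * CPk P M ^ 18 →
      samples P d N
        {X | ∀ (mh : ℕ), m ≤ mh →
          ∀ (ah : Fin mh → ℝ) (V1 : Matrix (Fin mh) (Fin d) ℝ)
            (Vs : Fin (L - 1) → Matrix (Fin mh) (Fin mh) ℝ),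
          (∑ j, |ah j| ≤ 1) →
          (∀ j, ∑ i, |V1 j i| ≤ 1) →
          (∀ p j, ∑ i, |Vs p j i| ≤ 1) →
          (∀ i : Fin N, nnFun σ ah V1 Vs (X i) = nnFun σ a W1 Ws (X i)) →
          ∫ x, (nnFun σ a W1 Ws x - nnFun σ ah V1 Vs x) ^ 2 ∂(piP P d) ≤ ε}
        ≥ ENNReal.ofReal (1 - Real.exp (-c * (N : ℝ) ^ ((1 : ℝ) / 4))) := by
  refine ⟨1, one_pos, ?_⟩
  intro P hP σ hσ d m L N hL ε hε a W1 Ws ha hW1 hWs M hM hN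
  have hPp : IsProbabilityMeasure P := hP.1
  have hμp : IsProbabilityMeasure (piP P d) := by unfold piP; infer_instance
  have hsp : IsProbabilityMeasure (samples P d N) := by unfold samples; infer_instance
  have hσ1 : ∀ x, |σ (clampR x)| ≤ 1 := fun x => hσ.2.2.2 _ (clampR_mem x)
  obtain ⟨n, rfl⟩ : ∃ n, L = n + 1 := ⟨L - 1, by omega⟩
  set f1 : (Fin d → ℝ) → ℝ := fun x =>
    nnFun (fun x => σ (clampR x)) a W1 Ws (fun i => clampR (x i)) with hf1
  have hbad := bad_bound hP hσ hL hε
    (nnFun_mem (s := fun x => σ (clampR x)) a ha W1 hW1 Ws hWs) hM hN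
  have hcube := ae_samples_cube hP d N
  rw [ae_iff] at hcube
  set S := {X : Fin N → Fin d → ℝ | ∀ (mh : ℕ), m ≤ mh →
          ∀ (ah : Fin mh → ℝ) (V1 : Matrix (Fin mh) (Fin d) ℝ)
            (Vs : Fin (n + 1 - 1) → Matrix (Fin mh) (Fin mh) ℝ),
          (∑ j, |ah j| ≤ 1) →
          (∀ j, ∑ i, |V1 j i| ≤ 1) →
          (∀ p j, ∑ i, |Vs p j i| ≤ 1) →
          (∀ i : Fin N, nnFun σ ah V1 Vs (X i) = nnFun σ a W1 Ws (X i)) →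
          ∫ x, (nnFun σ a W1 Ws x - nnFun σ ah V1 Vs x) ^ 2 ∂(piP P d) ≤ ε} with hS
  have hcover : (Set.univ : Set (Fin N → Fin d → ℝ)) ⊆
      S ∪ (BadS (piP P d) (absC (HC (fun x => σ (clampR x)) d (n + 1))) f1 N ε ∪
        {X | ¬ ∀ i j, |X i j| ≤ 1}) := by
    intro X _
    by_cases hX : ∀ i j, |X i j| ≤ 1
    swap
    · exact Or.inr (Or.inr hX)
    by_cases hXS : X ∈ S
    · exact Or.inl hXS
    refine Or.inr (Or.inl ⟨hX, ?_⟩)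
    simp only [hS, Set.mem_ofPred_eq, not_forall, not_le] at hXS
    obtain ⟨mh, _, ah, V1, Vs, hah, hV1, hVs, hfit, hgt⟩ := hXS
    refine ⟨_, nnFun_mem (s := fun x => σ (clampR x)) ah hah V1 hV1 Vs hVs, fun i => ?_, ?_⟩
    · have h1 := hfit i
      rw [nnFun_clamp hσ1 ah V1 hV1 Vs hVs (X i) (hX i),
        nnFun_clamp hσ1 a W1 hW1 Ws hWs (X i) (hX i)] at h1
      exact h1
    · refine lt_of_lt_of_eq hgt (integral_congr_ae ?_)
      filter_upwards [ae_pi_cube hP d] with x hx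
      rw [nnFun_clamp hσ1 ah V1 hV1 Vs hVs x hx, nnFun_clamp hσ1 a W1 hW1 Ws hWs x hx]
  have h1 : (1 : ENNReal) ≤ samples P d N S +
      ENNReal.ofReal (Real.exp (-(N : ℝ) ^ ((1 : ℝ) / 4))) := by
    calc (1 : ENNReal) = samples P d N Set.univ := measure_univ.symm
      _ ≤ _ := measure_mono hcover
      _ ≤ samples P d N S + (_ + _) :=
        (measure_union_le _ _).trans (add_le_add le_rfl (measure_union_le _ _))
      _ ≤ _ := by
        rw [hcube, add_zero]
        exact add_le_add le_rfl hbad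
  rw [ge_iff_le, ENNReal.ofReal_sub _ (Real.exp_pos _).le, ENNReal.ofReal_one, neg_one_mul]
  exact tsub_le_iff_right.2 h1

end
end
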